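/- arXiv:1810.05190 — 4 statements merged into one kernel-verified Lean document; each statement's English description precedes it below -/
import Mathlib

section
/- For all natural numbers m, n, p with m ≤ n+1, Maker has a winning strategy for the (p,p)-crossing game on S_{m×n}. -/
namespace CrossingGames

/-- A vertex of the square integer lattice `ℤ²`. -/
abbrev Vtx : Type := ℤ × ℤ

/-- An edge of the square integer lattice `ℤ²`, encoded as a base vertex together with a
direction: `(v, true)` is the horizontal edge joining `v = (x,y)` to `(x+1,y)`, while
`(v, false)` is the vertical edge joining `v = (x,y)` to `(x,y+1)`. -/
abbrev Edge : Type := Vtx × Bool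

/-- The two endpoints of an edge. -/
def ends (e : Edge) : Vtx × Vtx :=
  (e.1, if e.2 then (e.1.1 + 1, e.1.2) else (e.1.1, e.1.2 + 1))

/-- The edge `e` joins the vertices `u` and `v`. -/
def joins (e : Edge) (u v : Vtx) : Prop :=
  ((ends e).1 = u ∧ (ends e).2 = v) ∨ ((ends e).1 = v ∧ (ends e).2 = u)

/-- The vertex set of the grid `Λ_{m×n}`: all `(x,y) ∈ ℤ²` with `1 ≤ x ≤ m`, `1 ≤ y ≤ n`. -/
def lamVtx (m n : ℕ) : Set Vtx :=
  {v | 1 ≤ v.1 ∧ v.1 ≤ (m : ℤ) ∧ 1 ≤ v.2 ∧ v.2 ≤ (n : ℤ)}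

/-- The edge set of the grid `Λ_{m×n}`: lattice edges with both endpoints in `Λ_{m×n}`. -/
def lamEdges (m n : ℕ) : Set Edge :=
  {e | (ends e).1 ∈ lamVtx m n ∧ (ends e).2 ∈ lamVtx m n}

/-- The edge set of the board `S_{m×n}`: the grid `Λ_{m×n}` with all of its leftmost and
rightmost vertical edges deleted. -/
def sEdges (m n : ℕ) : Set Edge :=
  {e ∈ lamEdges m n | ¬ (e.2 = false ∧ (e.1.1 = 1 ∨ e.1.1 = (m : ℤ)))}

/-- The list of consecutive pairs of a list. -/
def cp {α : Type*} (l : List α) : List (α × α) := l.zip l.tail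

/-- `S` contains all the edges of a left-right crossing path of a board with `m` columns
and `n` rows: a path of edges of `S` joining a vertex `(1,y)` on the left-hand side of the
board to a vertex `(m,y')` on its right-hand side. -/
def HasCrossing (m n : ℕ) (S : Set Edge) : Prop :=
  ∃ l : List Vtx,
    (∃ v, l.head? = some v ∧ v.1 = 1) ∧
    (∃ v, l.getLast? = some v ∧ v.1 = (m : ℤ)) ∧
    (∀ v ∈ l, v ∈ lamVtx m n) ∧
    ∀ p ∈ cp l, ∃ e ∈ S, joins e p.1 p.2

/-- A strategy: given the list of all moves played so far (oldest first), produce the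
next move (a finite set of edges to claim). -/
abbrev Strategy : Type := List (Finset Edge) → Finset Edge

/-- The union of the moves sitting in positions of the given parity of a history
(`true`: positions 0, 2, 4, …; `false`: positions 1, 3, 5, …). -/
def altUnion : Bool → List (Finset Edge) → Finset Edge
  | _, [] => ∅
  | true, mv :: h => mv ∪ altUnion false h
  | false, _ :: h => altUnion true h

/-- All edges claimed by the player moving first (i.e. on even positions) in a history. -/
def firstClaimed (h : List (Finset Edge)) : Finset Edge := altUnion true h

/-- All edges claimed by the player moving second (i.e. on odd positions) in a history. -/
def secondClaimed (h : List (Finset Edge)) : Finset Edge := altUnion false h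

/-- All edges claimed so far in a history. -/
def allClaimed (h : List (Finset Edge)) : Finset Edge := h.foldr (· ∪ ·) ∅

/-- The history of moves (oldest first) after `t` full rounds, when the player moving
first uses strategy `σ` and the player moving second uses strategy `τ`. -/
def hist (σ τ : Strategy) : ℕ → List (Finset Edge)
  | 0 => []
  | t + 1 =>
    let h := hist σ τ t
    h ++ [σ h, τ (h ++ [σ h])]

/-- The move `mv` is legal on `board` after the history `h` for a player of bias `k`: it
consists of as-yet-unclaimed edges of the board, and there are exactly `k` of them, unless
fewer than `k` unclaimed edges remain, in which case the player claims all of them. -/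
def LegalMove (board : Set Edge) (h : List (Finset Edge)) (k : ℕ) (mv : Finset Edge) : Prop :=
  (↑mv : Set Edge) ⊆ board \ ↑(allClaimed h) ∧
    (mv.card = k ∨ (mv.card < k ∧ board \ ↑(allClaimed h) ⊆ (↑mv : Set Edge)))

/-- The player moving first (with bias `p`) always moves legally when playing `σ`
against `τ`. -/
def FirstLegal (board : Set Edge) (p : ℕ) (σ τ : Strategy) : Prop :=
  ∀ t, LegalMove board (hist σ τ t) p (σ (hist σ τ t))

/-- The player moving second (with bias `q`) always moves legally when playing `τ`
against `σ`. -/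
def SecondLegal (board : Set Edge) (q : ℕ) (σ τ : Strategy) : Prop :=
  ∀ t, LegalMove board (hist σ τ t ++ [σ (hist σ τ t)]) q (τ (hist σ τ t ++ [σ (hist σ τ t)]))

/-- Maker (playing first and claiming `p` edges per turn) has a winning strategy for the
Maker–Breaker game on `board` in which Breaker claims `q` edges per turn: she can
guarantee that at some point her claimed edges satisfy the winning condition `win`. -/
def MakerWins (board : Set Edge) (win : Set Edge → Prop) (p q : ℕ) : Prop :=
  ∃ σ : Strategy, ∀ τ : Strategy, SecondLegal board q σ τ →
    FirstLegal board p σ τ ∧ ∃ t, win ↑(firstClaimed (hist σ τ t))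

/-- Breaker (playing second and claiming `q` edges per turn) has a winning strategy for
the Maker–Breaker game on `board` in which Maker claims `p` edges per turn: he can
forever prevent Maker's claimed edges from satisfying the winning condition `win`. -/
def BreakerWins (board : Set Edge) (win : Set Edge → Prop) (p q : ℕ) : Prop :=
  ∃ τ : Strategy, ∀ σ : Strategy, FirstLegal board p σ τ →
    SecondLegal board q σ τ ∧ ∀ t, ¬ win ↑(firstClaimed (hist σ τ t))

/-!
The board `S_{(k+1)×k}` is self-dual: if the edges of `S` contain no left-right crossing, then the
duals of the remaining edges do. Hence Maker wins by strategy stealing. If she could not force a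
win, then Breaker could hold her off. She plays the duals of his answers in an imaginary game in
which the moves of Maker are the duals of the real moves of Breaker. As the imaginary Maker gets no
crossing, the real one does. A board `S_{m×n}` with `m ≤ n + 1` contains `S_{m×(m-1)}`, and every
crossing of the smaller board is a crossing of the larger one.

The duality is a discrete form of Stokes' theorem. Let `f` be the indicator function of the
vertices that `S` connects to the left side, and `g` the one for the duals of the edges not in `S`.
At every edge `f` or `g` has zero increment, so the discrete analogue of `∫ df ∧ dg` vanishes. If
neither set contained a crossing, it would equal a boundary term with value `1`.
-/

section PositionalGame

variable {α : Type*} {board C : Set α} {win : Set α → Prop} {p q k : ℕ}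

/-- The move `a` is legal for a player of bias `k` once the elements of `C` have been claimed.
This is `LegalMove` on an arbitrary board, with the history replaced by the set it claims. -/
def IsLegalClaim (board C : Set α) (k : ℕ) (a : Finset α) : Prop :=
  (a : Set α) ⊆ board \ C ∧ (a.card = k ∨ a.card < k ∧ board \ C ⊆ a)

lemma IsLegalClaim.card_le {a : Finset α} (ha : IsLegalClaim board C k a) : a.card ≤ k :=
  ha.2.elim Eq.le fun h => h.1.le

lemma exists_isLegalClaim_superset (hboard : board.Finite) {s : Set α} (hs : s ⊆ board \ C)
    (hcard : s.ncard ≤ k) : ∃ a : Finset α, s ⊆ a ∧ IsLegalClaim board C k a := by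
  have hfree : (board \ C).Finite := hboard.sdiff
  rcases le_or_gt k (board \ C).ncard with hk | hk
  · obtain ⟨a, hsa, ha, hak⟩ := Set.exists_subsuperset_card_eq hs hcard hk
    lift a to Finset α using hfree.subset ha
    exact ⟨a, hsa, ha, .inl (by rwa [Set.ncard_coe_finset] at hak)⟩
  · lift board \ C to Finset α using hfree with a ha
    exact ⟨a, hs, ha.le, .inr ⟨by rwa [Set.ncard_coe_finset] at hk, ha.ge⟩⟩

lemma exists_isLegalClaim (hboard : board.Finite) (C : Set α) (k : ℕ) :
    ∃ a : Finset α, IsLegalClaim board C k a :=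
  (exists_isLegalClaim_superset hboard (Set.empty_subset _) (by simp)).imp fun _ => And.right

lemma isLegalClaim_empty_of_subset (h : board ⊆ C) (k : ℕ) : IsLegalClaim board C k ∅ := by
  rcases k.eq_zero_or_pos with rfl | hk
  · exact ⟨by simp, .inl rfl⟩
  · exact ⟨by simp, .inr ⟨hk, by simp [Set.sdiff_eq_empty.2 h]⟩⟩

lemma IsLegalClaim.ncard_sdiff_union_le {a : Finset α} (ha : IsLegalClaim board C k a)
    (hk : 1 ≤ k) : (board \ (C ∪ a)).ncard ≤ (board \ C).ncard - 1 := by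
  rw [← Set.sdiff_sdiff]
  rcases ha.2 with hcard | ⟨-, hall⟩
  · rw [Set.ncard_sdiff ha.1, Set.ncard_coe_finset]
    omega
  · simp [Set.sdiff_eq_empty.2 hall]

/-- A strategy for Maker in terms of positions: `P M B` says that the position in which Maker holds
`M`, Breaker holds `B` and Maker is to move is one she aims for. She can go from each such position
to another one, whatever Breaker answers, and she has won in those where the board is exhausted. -/
structure IsWinningInvariant (board : Set α) (win : Set α → Prop) (p q : ℕ)
    (P : Set α → Set α → Prop) : Prop where
  exists_move : ∀ M B, P M B → ∃ a : Finset α, IsLegalClaim board (M ∪ B) p a ∧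
    ∀ b : Finset α, IsLegalClaim board (M ∪ B ∪ a) q b → P (M ∪ a) (B ∪ b)
  win_of_full : ∀ M B, P M B → board ⊆ M ∪ B → win M

/-- Maker, who is to move, can force a win from the position in which she holds `M` and Breaker
holds `B`. -/
inductive MakerCanWin (board : Set α) (win : Set α → Prop) (p q : ℕ) : Set α → Set α → Prop
  | of_win {M B : Set α} (h : win M) : MakerCanWin board win p q M B
  | of_move {M B : Set α} (a : Finset α) (ha : IsLegalClaim board (M ∪ B) p a)
      (h : ∀ b : Finset α, IsLegalClaim board (M ∪ B ∪ a) q b →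
        MakerCanWin board win p q (M ∪ a) (B ∪ b)) :
      MakerCanWin board win p q M B

lemma MakerCanWin.win_of_full {M B : Set α} (h : MakerCanWin board win p q M B)
    (hfull : board ⊆ M ∪ B) : win M := by
  induction h with
  | of_win h => exact h
  | @of_move M B a ha _ ih =>
    have ha_empty : (a : Set α) = ∅ :=
      Set.subset_empty_iff.1 (ha.1.trans (Set.sdiff_eq_empty.2 hfull).subset)
    have hpass : IsLegalClaim board (M ∪ B ∪ a) q ∅ :=
      isLegalClaim_empty_of_subset (hfull.trans Set.subset_union_left) q
    simpa [ha_empty, hfull] using ih ∅ hpass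

lemma isWinningInvariant_makerCanWin (hboard : board.Finite) (hwin : Monotone win) :
    IsWinningInvariant board win p q (MakerCanWin board win p q) where
  exists_move M B h := by
    cases h with
    | of_win h =>
      obtain ⟨a, ha⟩ := exists_isLegalClaim hboard (M ∪ B) p
      exact ⟨a, ha, fun _ _ => .of_win (hwin Set.subset_union_left h)⟩
    | of_move a ha h => exact ⟨a, ha, h⟩
  win_of_full _ _ := MakerCanWin.win_of_full

/-- Breaker, who is to move, can prevent a forced win of Maker from the position in which Maker
holds `M` and he holds `B`. -/
def BreakerCanHold (board : Set α) (win : Set α → Prop) (p q : ℕ) (M B : Set α) : Prop :=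
  ∃ b : Finset α, IsLegalClaim board (M ∪ B) q b ∧ ¬ MakerCanWin board win p q M (B ∪ b)

lemma breakerCanHold_of_not_makerCanWin {M B : Set α} (h : ¬ MakerCanWin board win p q M B)
    {a : Finset α} (ha : IsLegalClaim board (M ∪ B) p a) :
    BreakerCanHold board win p q (M ∪ a) B := by
  by_contra hhold
  refine h (.of_move a ha fun b hb => ?_)
  by_contra hb_hold
  exact hhold ⟨b, by rwa [Set.union_right_comm], hb_hold⟩

lemma BreakerCanHold.not_win {M B : Set α} (h : BreakerCanHold board win p q M B) : ¬ win M :=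
  fun hM => let ⟨_, _, hb⟩ := h; hb (.of_win hM)

variable {φ : α → α}

lemma exists_isLegalClaim_image_subset (hboard : board.Finite) (hφ : φ.Involutive)
    (hφboard : Set.MapsTo φ board board) (hqp : q ≤ p) {M B M' B' : Set α} (hB : φ '' B ⊆ M')
    {c : Finset α} (hc : IsLegalClaim board (M' ∪ B') q c) :
    ∃ a : Finset α, IsLegalClaim board (M ∪ B) p a ∧ φ '' c ⊆ M ∪ a := by
  have hfree : φ '' c \ M ⊆ board \ (M ∪ B) := by
    rintro _ ⟨⟨x, hx, rfl⟩, hxM⟩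
    refine ⟨hφboard (hc.1 hx).1, ?_⟩
    rintro (hxM' | hxB)
    · exact hxM hxM'
    · have hxM' : φ (φ x) ∈ M' := hB ⟨_, hxB, rfl⟩
      exact (hc.1 hx).2 (.inl (hφ x ▸ hxM'))
  have hcard : (φ '' c \ M).ncard ≤ p :=
    calc (φ '' c \ M).ncard ≤ (φ '' c).ncard :=
          Set.ncard_le_ncard Set.sdiff_subset (c.finite_toSet.image φ)
      _ ≤ c.card := (Set.ncard_image_le c.finite_toSet).trans_eq (Set.ncard_coe_finset c)
      _ ≤ p := hc.card_le.trans hqp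
  obtain ⟨a, hsa, ha⟩ := exists_isLegalClaim_superset hboard hfree hcard
  exact ⟨a, ha, Set.sdiff_subset_iff.1 hsa⟩

/-- The invariant of strategy stealing: Maker plays alongside a second game, at the position
`(M', B')` with Breaker to move, in which `φ` mirrors the real moves of Breaker into moves of Maker
and the other Breaker's moves are mirrored back into the real moves of Maker. -/
def MirrorsHeldPosition (board : Set α) (win : Set α → Prop) (p q : ℕ) (φ : α → α)
    (M B : Set α) : Prop :=
  ∃ M' B', φ '' B ⊆ M' ∧ φ '' B' ⊆ M ∧ BreakerCanHold board win p q M' B'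

lemma MirrorsHeldPosition.exists_move (hboard : board.Finite) (hφ : φ.Involutive)
    (hφboard : Set.MapsTo φ board board) (hqp : q ≤ p) {M B : Set α}
    (h : MirrorsHeldPosition board win p q φ M B) :
    ∃ a : Finset α, IsLegalClaim board (M ∪ B) p a ∧
      ∀ b : Finset α, IsLegalClaim board (M ∪ B ∪ a) q b →
        MirrorsHeldPosition board win p q φ (M ∪ a) (B ∪ b) := by
  obtain ⟨M', B', hBM', hB'M, b', hb', hhold⟩ := h
  obtain ⟨a, ha, hb'a⟩ := exists_isLegalClaim_image_subset hboard hφ hφboard hqp hBM' hb'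
  refine ⟨a, ha, fun b hb => ?_⟩
  have hB'a : φ '' (B' ∪ b') ⊆ M ∪ a := by
    rw [Set.image_union]
    exact Set.union_subset (hB'M.trans Set.subset_union_left) hb'a
  rw [Set.union_right_comm] at hb
  obtain ⟨a', ha', hba'⟩ := exists_isLegalClaim_image_subset hboard hφ hφboard hqp hB'a hb
  refine ⟨M' ∪ a', B' ∪ b', ?_, hB'a, breakerCanHold_of_not_makerCanWin hhold ha'⟩
  rw [Set.image_union]
  exact Set.union_subset (hBM'.trans Set.subset_union_left) hba'

lemma MirrorsHeldPosition.win_of_full (hwin : Monotone win) (hφ : φ.Involutive)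
    (hφboard : Set.MapsTo φ board board) (hdual : ∀ M, win M ∨ win (φ '' (board \ M)))
    {M B : Set α} (h : MirrorsHeldPosition board win p q φ M B) (hfull : board ⊆ M ∪ B) :
    win M := by
  obtain ⟨M', B', hBM', -, hhold⟩ := h
  refine hwin ?_ ((hdual M').resolve_left hhold.not_win)
  rintro _ ⟨x, ⟨hx, hxM'⟩, rfl⟩
  refine (hfull (hφboard hx)).resolve_right fun hxB => hxM' ?_
  exact hφ x ▸ hBM' ⟨φ x, hxB, rfl⟩

theorem exists_isWinningInvariant_of_selfDual (hboard : board.Finite) (hwin : Monotone win)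
    (hφ : φ.Involutive) (hφboard : Set.MapsTo φ board board)
    (hdual : ∀ M, win M ∨ win (φ '' (board \ M))) (hqp : q ≤ p) :
    ∃ P, IsWinningInvariant board win p q P ∧ P ∅ ∅ := by
  by_cases h : MakerCanWin board win p q ∅ ∅
  · exact ⟨_, isWinningInvariant_makerCanWin hboard hwin, h⟩
  · obtain ⟨a, ha⟩ := exists_isLegalClaim hboard (∅ ∪ ∅) p
    refine ⟨MirrorsHeldPosition board win p q φ, ⟨?_, ?_⟩, ∅ ∪ a, ∅, by simp, by simp,
      breakerCanHold_of_not_makerCanWin h ha⟩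
    · exact fun _ _ => MirrorsHeldPosition.exists_move hboard hφ hφboard hqp
    · exact fun _ _ => MirrorsHeldPosition.win_of_full hwin hφ hφboard hdual

end PositionalGame

section History

@[simp]
lemma allClaimed_nil : allClaimed [] = ∅ :=
  rfl

@[simp]
lemma allClaimed_cons (a : Finset Edge) (h : List (Finset Edge)) :
    allClaimed (a :: h) = a ∪ allClaimed h :=
  rfl

@[simp]
lemma allClaimed_append (h g : List (Finset Edge)) :
    allClaimed (h ++ g) = allClaimed h ∪ allClaimed g := by
  induction h with
  | nil => simp
  | cons a h ih => simp [ih, Finset.union_assoc]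

lemma altUnion_append (c : Bool) (h g : List (Finset Edge)) :
    altUnion c (h ++ g) = altUnion c h ∪ altUnion (c ^^ h.length.bodd) g := by
  induction h generalizing c with
  | nil => simp [altUnion]
  | cons a h ih => cases c <;> simp [altUnion, ih, Finset.union_assoc]

lemma firstClaimed_union_secondClaimed (h : List (Finset Edge)) :
    firstClaimed h ∪ secondClaimed h = allClaimed h := by
  induction h with
  | nil => rfl
  | cons a h ih =>
    calc a ∪ secondClaimed h ∪ firstClaimed h
      _ = a ∪ (firstClaimed h ∪ secondClaimed h) := by
        rw [Finset.union_assoc, Finset.union_comm (secondClaimed h)]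
      _ = a ∪ allClaimed h := by rw [ih]

variable (σ τ : Strategy) (t : ℕ)

lemma bodd_length_hist : (hist σ τ t).length.bodd = false := by
  induction t with
  | zero => simp [hist]
  | succ t ih => simp [hist, ih]

lemma firstClaimed_hist_succ :
    firstClaimed (hist σ τ (t + 1)) = firstClaimed (hist σ τ t) ∪ σ (hist σ τ t) := by
  simp [hist, firstClaimed, altUnion_append, altUnion, bodd_length_hist]

lemma secondClaimed_hist_succ :
    secondClaimed (hist σ τ (t + 1)) =
      secondClaimed (hist σ τ t) ∪ τ (hist σ τ t ++ [σ (hist σ τ t)]) := by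
  simp [hist, secondClaimed, altUnion_append, altUnion, bodd_length_hist]

variable {σ τ} {board : Set Edge} {p : ℕ}

lemma FirstLegal.ncard_sdiff_allClaimed_hist_le (hboard : board.Finite)
    (hσ : FirstLegal board p σ τ) (hp : 1 ≤ p) (t : ℕ) :
    (board \ allClaimed (hist σ τ t)).ncard ≤ board.ncard - t := by
  induction t with
  | zero => exact Set.ncard_le_ncard Set.sdiff_subset hboard
  | succ t ih =>
    have hmove := IsLegalClaim.ncard_sdiff_union_le (hσ t) hp
    have hsub : board \ allClaimed (hist σ τ (t + 1)) ⊆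
        board \ (allClaimed (hist σ τ t) ∪ σ (hist σ τ t)) := by
      refine Set.sdiff_subset_sdiff_right ?_
      simp [hist, ← Set.union_assoc]
    have hround := Set.ncard_le_ncard hsub hboard.sdiff
    omega

lemma FirstLegal.exists_subset_allClaimed_hist (hboard : board.Finite)
    (hσ : FirstLegal board p σ τ) (hp : 1 ≤ p) :
    ∃ t, board ⊆ allClaimed (hist σ τ t) := by
  refine ⟨board.ncard, Set.sdiff_eq_empty.1 ((Set.ncard_eq_zero hboard.sdiff).1 ?_)⟩
  simpa using hσ.ncard_sdiff_allClaimed_hist_le hboard hp board.ncard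

theorem makerWins_of_isWinningInvariant (hboard : board.Finite) {win : Set Edge → Prop} {q : ℕ}
    (hp : 1 ≤ p) {P : Set Edge → Set Edge → Prop} (hP : IsWinningInvariant board win p q P)
    (hP₀ : P ∅ ∅) : MakerWins board win p q := by
  choose! move hmove_legal hmove using hP.exists_move
  let σ : Strategy := fun h => move (firstClaimed h) (secondClaimed h)
  refine ⟨σ, fun τ hτ => ?_⟩
  have hclaimed (h : List (Finset Edge)) :
      (firstClaimed h ∪ secondClaimed h : Set Edge) = allClaimed h := by
    rw [← firstClaimed_union_secondClaimed, Finset.coe_union]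
  have hinv (t : ℕ) : P (firstClaimed (hist σ τ t)) (secondClaimed (hist σ τ t)) := by
    induction t with
    | zero => simpa [hist, firstClaimed, secondClaimed, altUnion] using hP₀
    | succ t ih =>
      have hb := hτ t
      simp only [LegalMove, allClaimed_append, allClaimed_cons, allClaimed_nil, Finset.union_empty,
        Finset.coe_union, ← hclaimed] at hb
      rw [firstClaimed_hist_succ, secondClaimed_hist_succ, Finset.coe_union, Finset.coe_union]
      exact hmove _ _ ih _ hb
  have hσ : FirstLegal board p σ τ := fun t => by
    rw [LegalMove, ← hclaimed]
    exact hmove_legal _ _ (hinv t)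
  obtain ⟨t, ht⟩ := hσ.exists_subset_allClaimed_hist hboard hp
  exact ⟨hσ, t, hP.win_of_full _ _ (hinv t) (by rwa [hclaimed])⟩

end History

section Crossing

variable {m n n' k : ℕ} {S : Set Edge}

lemma mem_lamVtx {x y : ℤ} :
    (x, y) ∈ lamVtx m n ↔ 1 ≤ x ∧ x ≤ m ∧ 1 ≤ y ∧ y ≤ n :=
  Iff.rfl

lemma lamVtx_mono_right (h : n ≤ n') : lamVtx m n ⊆ lamVtx m n' := fun _ ⟨h₁, h₂, h₃, h₄⟩ =>
  ⟨h₁, h₂, h₃, h₄.trans (by exact_mod_cast h)⟩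

lemma sEdges_mono_right (h : n ≤ n') : sEdges m n ⊆ sEdges m n' := fun _ ⟨⟨h₁, h₂⟩, h₃⟩ =>
  ⟨⟨lamVtx_mono_right h h₁, lamVtx_mono_right h h₂⟩, h₃⟩

lemma finite_sEdges (m n : ℕ) : (sEdges m n).Finite := by
  have hfin : ((Set.Icc (1 : ℤ) m ×ˢ Set.Icc (1 : ℤ) n) ×ˢ (Set.univ : Set Bool)).Finite :=
    ((Set.finite_Icc _ _).prod (Set.finite_Icc _ _)).prod Set.finite_univ
  exact hfin.subset fun _ ⟨⟨⟨h₁, h₂, h₃, h₄⟩, _⟩, _⟩ => ⟨⟨⟨h₁, h₂⟩, h₃, h₄⟩, trivial⟩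

lemma horizontal_mem_sEdges {x y : ℤ} :
    ((x, y), true) ∈ sEdges m n ↔ 1 ≤ x ∧ x + 1 ≤ m ∧ 1 ≤ y ∧ y ≤ n := by
  simp only [sEdges, lamEdges, ends, Set.mem_ofPred_eq, mem_lamVtx, ↓reduceIte,
    Bool.true_eq_false, false_and, not_false_eq_true, and_true]
  omega

lemma vertical_mem_sEdges {x y : ℤ} :
    ((x, y), false) ∈ sEdges m n ↔ 2 ≤ x ∧ x + 1 ≤ m ∧ 1 ≤ y ∧ y + 1 ≤ n := by
  simp only [sEdges, lamEdges, ends, Set.mem_ofPred_eq, mem_lamVtx, ↓reduceIte,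
    Bool.false_eq_true, true_and, not_or]
  omega

lemma monotone_hasCrossing (m n : ℕ) : Monotone (HasCrossing m n) :=
  fun _ _ hST ⟨l, hfirst, hlast, hl, hedges⟩ => ⟨l, hfirst, hlast, hl, fun p hp =>
    (hedges p hp).imp fun _ => And.imp_left (@hST _)⟩

lemma HasCrossing.mono_right (h : HasCrossing m n S) (hn : n ≤ n') : HasCrossing m n' S :=
  let ⟨l, hfirst, hlast, hl, hedges⟩ := h
  ⟨l, hfirst, hlast, fun v hv => lamVtx_mono_right hn (hl v hv), hedges⟩

lemma hasCrossing_one_left (hn : 1 ≤ n) (S : Set Edge) : HasCrossing 1 n S :=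
  ⟨[(1, 1)], by simp, by simp, by simp [lamVtx, hn], by simp [cp]⟩

/-- One step of a path with edges in `S` that stays in the grid `Λ_{m×n}`. -/
def StepsTo (m n : ℕ) (S : Set Edge) (u v : Vtx) : Prop :=
  v ∈ lamVtx m n ∧ ∃ e ∈ S, joins e u v

/-- The vertices of `Λ_{m×n}` that edges of `S` connect to the left side. -/
def leftCluster (m n : ℕ) (S : Set Edge) : Set Vtx :=
  {v | ∃ u ∈ lamVtx m n, u.1 = 1 ∧ Relation.ReflTransGen (StepsTo m n S) u v}

lemma rel_of_mem_cp {α : Type*} {R : α → α → Prop} {l : List α} (hl : l.IsChain R) :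
    ∀ p ∈ cp l, R p.1 p.2 := by
  induction hl with
  | nil | singleton => simp [cp]
  | cons_cons h _ ih => exact List.forall_mem_cons.2 ⟨h, ih⟩

lemma hasCrossing_of_mem_leftCluster {v : Vtx} (hv : v ∈ leftCluster m n S) (hvm : v.1 = m) :
    HasCrossing m n S := by
  obtain ⟨u, hu, hu₁, huv⟩ := hv
  obtain ⟨l, hl, hlast⟩ := List.exists_isChain_cons_of_relationReflTransGen huv
  refine ⟨u :: l, ⟨u, rfl, hu₁⟩, ⟨v, ?_, hvm⟩, ?_, fun p hp => (rel_of_mem_cp hl p hp).2⟩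
  · rw [List.getLast?_eq_getLast_of_ne_nil (List.cons_ne_nil _ _), hlast]
  · exact hl.induction _ _ (fun _ _ h _ => h.1) fun _ => hu

lemma mem_leftCluster_of_fst_eq_one {v : Vtx} (hv : v ∈ lamVtx m n) (hv₁ : v.1 = 1) :
    v ∈ leftCluster m n S :=
  ⟨v, hv, hv₁, .refl⟩

lemma ends_mem_leftCluster_iff {e : Edge} (heS : e ∈ S) (he : e ∈ lamEdges m n) :
    (ends e).2 ∈ leftCluster m n S ↔ (ends e).1 ∈ leftCluster m n S := by
  constructor <;> rintro ⟨u, hu, hu₁, huv⟩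
  · exact ⟨u, hu, hu₁, huv.tail ⟨he.1, e, heS, .inr ⟨rfl, rfl⟩⟩⟩
  · exact ⟨u, hu, hu₁, huv.tail ⟨he.2, e, heS, .inl ⟨rfl, rfl⟩⟩⟩

/-- The edge dual to `e`, in coordinates in which the planar dual of `S_{(k+1)×n}` is again such a
board: transposition turns it from a board to be crossed from bottom to top into `S_{(n+1)×k}`. -/
def dual : Edge → Edge
  | ((x, y), true) => ((y, x), true)
  | ((x, y), false) => ((y + 1, x - 1), false)

lemma involutive_dual : Function.Involutive dual := by
  rintro ⟨⟨x, y⟩, _ | _⟩ <;> simp [dual]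

lemma mapsTo_dual_sEdges (k n : ℕ) :
    Set.MapsTo dual (sEdges (k + 1) n) (sEdges (n + 1) k) := by
  rintro ⟨⟨x, y⟩, _ | _⟩ h
  · rw [vertical_mem_sEdges] at h
    rw [dual, vertical_mem_sEdges]
    omega
  · rw [horizontal_mem_sEdges] at h
    rw [dual, horizontal_mem_sEdges]
    omega

/-- The increment of `f` along the edge `e`, oriented to the right or upwards. -/
def increment {R : Type*} [Sub R] (f : Vtx → R) (e : Edge) : R := f (ends e).2 - f (ends e).1

lemma increment_indicator_leftCluster {e : Edge} (heS : e ∈ S) (he : e ∈ lamEdges m n) :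
    increment ((leftCluster m n S).indicator (1 : Vtx → ℤ)) e = 0 := by
  classical
  simp [increment, Set.indicator_apply, ends_mem_leftCluster_iff heS he]

section Stokes

variable {R : Type*} [CommRing R]

lemma sum_range_sub_mul (f g : ℕ → R) (N : ℕ) :
    ∑ i ∈ Finset.range (N + 1), (f (i + 1) - f i) * g i =
      f (N + 1) * g N - f 0 * g 0 - ∑ i ∈ Finset.range N, f (i + 1) * (g (i + 1) - g i) := by
  induction N with
  | zero => simp [sub_mul]
  | succ N ih => rw [Finset.sum_range_succ, ih, Finset.sum_range_succ _ N]; ring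

lemma sum_mul_sub_eq_one_add_sum_mul_sub {K N : ℕ} {a c : ℕ → ℕ → R}
    (ha₀ : ∀ j ≤ N, a 0 j = 1) (ha₁ : ∀ j ≤ N, a (K + 1) j = 0)
    (hc₀ : ∀ i ≤ K, c i 0 = 1) (hc₁ : ∀ i ≤ K, c i (N + 1) = 0) :
    ∑ i ∈ Finset.range (K + 1), ∑ j ∈ Finset.range (N + 1),
        (a (i + 1) j - a i j) * (c i (j + 1) - c i j) =
      1 + ∑ j ∈ Finset.range N, ∑ i ∈ Finset.range K,
        (a (i + 1) (j + 1) - a (i + 1) j) * (c (i + 1) (j + 1) - c i (j + 1)) := by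
  -- Summing by parts along rows moves the differences from `c` to `a`; along columns, back to `c`.
  have sum_row : ∀ i ∈ Finset.range (K + 1), ∑ j ∈ Finset.range (N + 1),
      (a (i + 1) j - a i j) * (c i (j + 1) - c i j) = (a i 0 - a (i + 1) 0) -
        ∑ j ∈ Finset.range N,
          ((a (i + 1) (j + 1) - a (i + 1) j) - (a i (j + 1) - a i j)) * c i (j + 1) := by
    intro i hi
    have hi' : i ≤ K := Finset.mem_range_succ_iff.1 hi
    have hparts := sum_range_sub_mul (c i) (fun j => a (i + 1) j - a i j) N
    rw [hc₀ i hi', hc₁ i hi'] at hparts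
    calc ∑ j ∈ Finset.range (N + 1), (a (i + 1) j - a i j) * (c i (j + 1) - c i j)
      _ = ∑ j ∈ Finset.range (N + 1), (c i (j + 1) - c i j) * (a (i + 1) j - a i j) :=
        Finset.sum_congr rfl fun j _ => mul_comm _ _
      _ = (a i 0 - a (i + 1) 0) - ∑ j ∈ Finset.range N,
          c i (j + 1) * ((a (i + 1) (j + 1) - a i (j + 1)) - (a (i + 1) j - a i j)) := by
        rw [hparts]; ring
      _ = _ := congrArg _ (Finset.sum_congr rfl fun j _ => by ring)
  have sum_column : ∀ j ∈ Finset.range N, ∑ i ∈ Finset.range (K + 1),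
      ((a (i + 1) (j + 1) - a (i + 1) j) - (a i (j + 1) - a i j)) * c i (j + 1) =
        -∑ i ∈ Finset.range K,
          (a (i + 1) (j + 1) - a (i + 1) j) * (c (i + 1) (j + 1) - c i (j + 1)) := by
    intro j hj
    have hj' : j + 1 ≤ N := Finset.mem_range.1 hj
    rw [sum_range_sub_mul (fun i => a i (j + 1) - a i j) (fun i => c i (j + 1)), ha₀ _ hj',
      ha₀ _ (Nat.le_of_succ_le hj'), ha₁ _ hj', ha₁ _ (Nat.le_of_succ_le hj')]
    ring
  rw [Finset.sum_congr rfl sum_row, Finset.sum_sub_distrib, Finset.sum_range_sub', Finset.sum_comm,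
    Finset.sum_congr rfl sum_column, ha₀ 0 (Nat.zero_le N), ha₁ 0 (Nat.zero_le N),
    Finset.sum_neg_distrib]
  ring

lemma exists_increment_mul_increment_dual_ne_zero [Nontrivial R] (hk : 1 ≤ k) (hn : 1 ≤ n)
    {f g : Vtx → R}
    (hf₀ : ∀ v ∈ lamVtx (k + 1) n, v.1 = 1 → f v = 1)
    (hf₁ : ∀ v ∈ lamVtx (k + 1) n, v.1 = k + 1 → f v = 0)
    (hg₀ : ∀ v ∈ lamVtx (n + 1) k, v.1 = 1 → g v = 1)
    (hg₁ : ∀ v ∈ lamVtx (n + 1) k, v.1 = n + 1 → g v = 0) :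
    ∃ e ∈ sEdges (k + 1) n, increment f e * increment g (dual e) ≠ 0 := by
  by_contra! h
  obtain ⟨K, rfl⟩ := Nat.exists_eq_add_of_le' hk
  obtain ⟨N, rfl⟩ := Nat.exists_eq_add_of_le' hn
  have hstokes := sum_mul_sub_eq_one_add_sum_mul_sub (K := K) (N := N)
    (a := fun i j => f (i + 1, j + 1)) (c := fun i j => g (j + 1, i + 1))
    (fun j hj => hf₀ _ (mem_lamVtx.2 (by omega)) (by simp))
    (fun j hj => hf₁ _ (mem_lamVtx.2 (by omega)) (by simp))
    (fun i hi => hg₀ _ (mem_lamVtx.2 (by omega)) (by simp))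
    (fun i hi => hg₁ _ (mem_lamVtx.2 (by omega)) (by simp))
  rw [Finset.sum_eq_zero, Finset.sum_eq_zero] at hstokes
  · simp at hstokes
  · refine fun j hj => Finset.sum_eq_zero fun i hi => ?_
    rw [Finset.mem_range] at hi hj
    simpa [increment, ends, dual, add_assoc, one_add_one_eq_two, add_sub_assoc] using
      h ((i + 2, j + 1), false) (by rw [vertical_mem_sEdges]; push_cast; omega)
  · refine fun i hi => Finset.sum_eq_zero fun j hj => ?_
    rw [Finset.mem_range] at hi hj
    simpa [increment, ends, dual] using
      h ((i + 1, j + 1), true) (by rw [horizontal_mem_sEdges]; push_cast; omega)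

end Stokes

theorem hasCrossing_or_hasCrossing_dual (hk : 1 ≤ k) (hn : 1 ≤ n) (S : Set Edge) :
    HasCrossing (k + 1) n S ∨ HasCrossing (n + 1) k (dual '' (sEdges (k + 1) n \ S)) := by
  set T := dual '' (sEdges (k + 1) n \ S)
  by_contra! h
  obtain ⟨hS_cross, hT_cross⟩ := h
  obtain ⟨e, he, hne⟩ := exists_increment_mul_increment_dual_ne_zero hk hn
    (f := (leftCluster (k + 1) n S).indicator (1 : Vtx → ℤ))
    (g := (leftCluster (n + 1) k T).indicator (1 : Vtx → ℤ))
    (fun v hv hv₁ => Set.indicator_of_mem (mem_leftCluster_of_fst_eq_one hv hv₁) _)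
    (fun v _ hv => Set.indicator_of_notMem
      (fun hmem => hS_cross (hasCrossing_of_mem_leftCluster hmem (by exact_mod_cast hv))) _)
    (fun v hv hv₁ => Set.indicator_of_mem (mem_leftCluster_of_fst_eq_one hv hv₁) _)
    (fun v _ hv => Set.indicator_of_notMem
      (fun hmem => hT_cross (hasCrossing_of_mem_leftCluster hmem (by exact_mod_cast hv))) _)
  apply hne
  by_cases heS : e ∈ S
  · rw [increment_indicator_leftCluster heS he.1, zero_mul]
  · have heT : dual e ∈ T := ⟨e, ⟨he, heS⟩, rfl⟩
    rw [increment_indicator_leftCluster heT (mapsTo_dual_sEdges k n he).1, mul_zero]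

lemma hasCrossing_or_hasCrossing_dual_of_le (hkn : k ≤ n) (hn : 1 ≤ n) (S : Set Edge) :
    HasCrossing (k + 1) n S ∨ HasCrossing (k + 1) n (dual '' (sEdges (k + 1) k \ S)) := by
  rcases k.eq_zero_or_pos with rfl | hk
  · exact .inl (hasCrossing_one_left hn S)
  · exact (hasCrossing_or_hasCrossing_dual hk hk S).imp (·.mono_right hkn) (·.mono_right hkn)

end Crossing

section Piecewise

variable {α : Type*} {s t : Set α} [∀ x, Decidable (x ∈ s)] {f : α → α}

lemma involutive_piecewise_id (hf : f.Involutive) (hs : Set.MapsTo f s s) :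
    Function.Involutive (s.piecewise f id) := fun x => by
  by_cases hx : x ∈ s
  · simp [hx, hs hx, hf x]
  · simp [hx]

lemma mapsTo_piecewise_id (hs : Set.MapsTo f s s) (hst : s ⊆ t) :
    Set.MapsTo (s.piecewise f id) t t := fun x hx => by
  by_cases hxs : x ∈ s
  · simpa [hxs] using hst (hs hxs)
  · simpa [hxs] using hx

end Piecewise

theorem maker_wins_balanced_game_on_short_board_general
    (m n p q : ℕ) (hm : 1 ≤ m) (hn : 1 ≤ n) (hp : 1 ≤ p) (hqp : q ≤ p) (hmn : m ≤ n + 1) :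
    MakerWins (sEdges m n) (HasCrossing m n) p q := by
  classical
  obtain ⟨k, rfl⟩ := Nat.exists_eq_add_of_le' hm
  have hkn : k ≤ n := Nat.le_of_succ_le_succ hmn
  have hsub : sEdges (k + 1) k ⊆ sEdges (k + 1) n := sEdges_mono_right hkn
  have hdual : Set.MapsTo dual (sEdges (k + 1) k) (sEdges (k + 1) k) := mapsTo_dual_sEdges k k
  let φ : Edge → Edge := (sEdges (k + 1) k).piecewise dual id
  have hφ_dual (S : Set Edge) :
      dual '' (sEdges (k + 1) k \ S) ⊆ φ '' (sEdges (k + 1) n \ S) := by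
    rintro _ ⟨e, ⟨he, heS⟩, rfl⟩
    exact ⟨e, ⟨hsub he, heS⟩, Set.piecewise_eq_of_mem _ _ _ he⟩
  have hcross (S : Set Edge) := (hasCrossing_or_hasCrossing_dual_of_le hkn hn S).imp_right
    (monotone_hasCrossing (k + 1) n (hφ_dual S))
  obtain ⟨P, hP, hP₀⟩ := exists_isWinningInvariant_of_selfDual (finite_sEdges _ _)
    (monotone_hasCrossing _ _) (involutive_piecewise_id involutive_dual hdual)
    (mapsTo_piecewise_id hdual hsub) hcross hqp
  exact makerWins_of_isWinningInvariant (finite_sEdges _ _) hp hP hP₀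

/-- **Proposition (i).** For all (positive) natural numbers `m, n, p` with `m ≤ n + 1`,
Maker has a winning strategy for the `(p,p)`-crossing game on `S_{m×n}`. -/
theorem maker_wins_balanced_game_on_short_board
    (m n p : ℕ) (hm : 1 ≤ m) (hn : 1 ≤ n) (hp : 1 ≤ p) (hmn : m ≤ n + 1) :
    MakerWins (sEdges m n) (HasCrossing m n) p p := by
  exact maker_wins_balanced_game_on_short_board_general m n p p hm hn hp le_rfl hmn

end CrossingGames
end

section
/- For all natural numbers m, n, p with m ≥ (p+1)(n+1), Breaker has a winning strategy for the (p,p)-crossing game on S_{m×n}. -/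
namespace CrossingGames

/-!
Cut `p + 1` disjoint copies of `S_{(n+1)×n}` out of the board. Maker's first move misses one of
them, and Breaker plays only there, where he now moves first. The planar dual of `S_{(n+1)×n}` is
again `S_{(n+1)×n}`, and a left-right crossing cannot be disjoint from a crossing of the dual, so
two players both trying to cross cannot both succeed. Were Maker able to force a crossing when
moving second, Breaker could force a dual crossing in the same way by passing once; hence she
cannot, and by determinacy Breaker can prevent her from crossing.

That two such crossings meet is seen by counting, with signs, how often the dual crossing meets the
part of a row to the left of a given vertex. This number does not change along paths that avoid the
dual crossing, but it is `0` on the left-hand side and `1` on the right-hand side.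
-/

section PartialGame

variable {α β : Type*} [DecidableEq α] [DecidableEq β] {E F D : Finset α} {p : ℕ}
  {W W' : Finset α → Prop}

/-- A move claiming at most `p` elements of the board `E` outside the set `C` of elements already
claimed. Unlike `LegalMove` it may claim fewer than `p` elements, so that players may pass. -/
structure IsPartialMove (E : Finset α) (p : ℕ) (C Y : Finset α) : Prop where
  subset : Y ⊆ E \ C
  card_le : Y.card ≤ p

theorem IsPartialMove.empty (E : Finset α) (p : ℕ) (C : Finset α) : IsPartialMove E p C ∅ :=
  ⟨Finset.empty_subset _, Nat.zero_le p⟩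

theorem IsPartialMove.map (e : α ≃ β) {C Y : Finset α} (h : IsPartialMove E p C Y) :
    IsPartialMove (E.map e.toEmbedding) p (C.map e.toEmbedding) (Y.map e.toEmbedding) where
  subset := by
    rw [← Finset.map_sdiff]
    exact Finset.map_subset_map.2 h.subset
  card_le := (Finset.card_map _).trans_le h.card_le

/-- `ResponderForces E p W F D`: in the game of partial moves of bias `p` on `E`, with her opponent
(who owns `D`) to move, the responding player (who owns `F`) can force her set to satisfy `W`. -/
inductive ResponderForces (E : Finset α) (p : ℕ) (W : Finset α → Prop) :
    Finset α → Finset α → Prop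
  | win {F D : Finset α} (hW : W F) : ResponderForces E p W F D
  | respond {F D : Finset α} (f : Finset α → Finset α)
      (hf : ∀ Y, IsPartialMove E p (F ∪ D) Y → IsPartialMove E p (F ∪ (D ∪ Y)) (f Y))
      (forces : ∀ Y, IsPartialMove E p (F ∪ D) Y → ResponderForces E p W (F ∪ f Y) (D ∪ Y)) :
      ResponderForces E p W F D

namespace ResponderForces

theorem exists_response (h : ResponderForces E p W F D) {Y : Finset α}
    (hY : IsPartialMove E p (F ∪ D) Y) :
    ∃ X, IsPartialMove E p (F ∪ (D ∪ Y)) X ∧ ResponderForces E p W (F ∪ X) (D ∪ Y) := by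
  cases h with
  | win hW => exact ⟨∅, .empty _ _ _, .win (by rwa [Finset.union_empty])⟩
  | respond f hf forces => exact ⟨f Y, hf Y hY, forces Y hY⟩

theorem of_forall_exists_response
    (h : ∀ Y, IsPartialMove E p (F ∪ D) Y →
      ∃ X, IsPartialMove E p (F ∪ (D ∪ Y)) X ∧ ResponderForces E p W (F ∪ X) (D ∪ Y)) :
    ResponderForces E p W F D := by
  choose! f hf using h
  exact .respond f (fun Y hY => (hf Y hY).1) (fun Y hY => (hf Y hY).2)

theorem anti_right {D' : Finset α} (h : ResponderForces E p W F D') (hD : D ⊆ D') :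
    ResponderForces E p W F D := by
  induction h generalizing D with
  | win hW => exact .win hW
  | @respond F D' f hf _ ih =>
    have restrict {Y : Finset α} (hY : IsPartialMove E p (F ∪ D) Y) :
        IsPartialMove E p (F ∪ D') (Y \ D') :=
      ⟨by have := hY.subset; grind, (Finset.card_le_card Finset.sdiff_subset).trans hY.card_le⟩
    refine .respond (fun Y => f (Y \ D')) (fun Y hY => ?_) (fun Y hY => ?_)
    · have hX := hf _ (restrict hY)
      rw [Finset.union_sdiff_self_eq_union] at hX
      exact ⟨hX.subset.trans (Finset.sdiff_subset_sdiff subset_rfl (by gcongr)), hX.card_le⟩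
    · refine ih _ (restrict hY) ?_
      rw [Finset.union_sdiff_self_eq_union]
      exact Finset.union_subset_union_left hD

theorem map (e : α ≃ β) (h : ResponderForces E p W F D) :
    ResponderForces (E.map e.toEmbedding) p (fun S => W (S.map e.symm.toEmbedding))
      (F.map e.toEmbedding) (D.map e.toEmbedding) := by
  have map_symm_map (S : Finset α) : (S.map e.toEmbedding).map e.symm.toEmbedding = S := by
    ext; simp
  have map_map_symm (S : Finset β) : (S.map e.symm.toEmbedding).map e.toEmbedding = S := by
    ext; simp
  induction h with
  | win hW => exact .win (by rwa [map_symm_map])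
  | @respond F D f hf _ ih =>
    have pull_back {Y : Finset β} (hY : IsPartialMove (E.map e.toEmbedding) p
        (F.map e.toEmbedding ∪ D.map e.toEmbedding) Y) :
        IsPartialMove E p (F ∪ D) (Y.map e.symm.toEmbedding) := by
      simpa only [← Finset.map_union, map_symm_map] using hY.map e.symm
    refine .respond (fun Y => (f (Y.map e.symm.toEmbedding)).map e.toEmbedding)
      (fun Y hY => ?_) (fun Y hY => ?_)
    · simpa only [Finset.map_union, map_map_symm] using (hf _ (pull_back hY)).map e
    · simpa only [Finset.map_union, map_map_symm] using ih _ (pull_back hY)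

theorem exists_superset (h : ResponderForces E p W F D) (hFD : Disjoint F D) :
    ∃ G, F ⊆ G ∧ Disjoint G D ∧ W G := by
  induction h with
  | @win F D hW => exact ⟨F, subset_rfl, hFD, hW⟩
  | @respond F D f hf _ ih =>
    have pass := IsPartialMove.empty E p (F ∪ D)
    have hX := (hf ∅ pass).subset
    obtain ⟨G, hFG, hGD, hG⟩ := ih ∅ pass (by rw [Finset.disjoint_left] at hFD ⊢; grind)
    rw [Finset.union_empty] at hGD
    exact ⟨G, Finset.union_subset_left hFG, hGD, hG⟩

/-- The two responding strategies are played against each other, each reply being the move that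
the other strategy answers. -/
theorem not_of_incompatible (hWW' : ∀ F D, Disjoint F D → W F → ¬ W' D)
    (h : ResponderForces E p W F D) (hFD : Disjoint F D) {Y : Finset α}
    (hY : IsPartialMove E p (F ∪ D) Y) : ¬ ResponderForces E p W' (D ∪ Y) F := by
  intro h'
  induction h generalizing Y with
  | @win F D hW =>
    have hdisj : Disjoint (D ∪ Y) F := by
      have := hY.subset
      rw [Finset.disjoint_left] at hFD ⊢
      grind
    obtain ⟨G, -, hGF, hG⟩ := h'.exists_superset hdisj
    exact hWW' F G hGF.symm hW hG
  | @respond F D f hf _ ih =>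
    have hX := hf Y hY
    obtain ⟨Z, hZ, hforces⟩ :=
      h'.exists_response (Y := f Y) ⟨by have := hX.subset; grind, hX.card_le⟩
    have hdisj : Disjoint (F ∪ f Y) (D ∪ Y) := by
      have := hX.subset
      have := hY.subset
      rw [Finset.disjoint_left] at hFD ⊢
      grind
    exact ih Y hY hdisj ⟨by have := hZ.subset; grind, hZ.card_le⟩ hforces

end ResponderForces

theorem exists_move_of_not_responderForces (h : ¬ ResponderForces E p W F D) :
    ∃ Y, IsPartialMove E p (F ∪ D) Y ∧
      ∀ X, IsPartialMove E p (F ∪ (D ∪ Y)) X → ¬ ResponderForces E p W (F ∪ X) (D ∪ Y) := by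
  contrapose! h
  exact .of_forall_exists_response h

theorem not_responderForces_of_selfDual (ρ : Equiv.Perm α) (hE : E.map ρ.toEmbedding = E)
    (hW : ∀ F D, Disjoint F D → W F → ¬ W (D.map ρ.symm.toEmbedding)) :
    ¬ ResponderForces E p W ∅ ∅ := fun h =>
  h.not_of_incompatible hW (Finset.disjoint_empty_left _) (.empty _ _ _)
    (by simpa only [hE, Finset.map_empty, Finset.union_empty] using h.map ρ)

end PartialGame

theorem exists_disjoint_of_card_lt {ι α : Type*} [Fintype ι] {E : ι → Finset α}
    (hE : Pairwise (Function.onFun Disjoint E)) {X : Finset α} (hX : X.card < Fintype.card ι) :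
    ∃ k, Disjoint X (E k) := by
  by_contra! hmeet
  simp only [Finset.not_disjoint_iff] at hmeet
  choose f hfX hfE using hmeet
  refine hX.not_ge (Finset.card_le_card_of_injOn f (fun k _ => hfX k) fun k _ l _ hkl => ?_)
  by_contra hne
  exact Finset.disjoint_left.1 (hE hne) (hfE k) (hkl ▸ hfE l)

section Histories

theorem altUnion_append_of_even (b : Bool) (l : List (Finset Edge)) :
    ∀ h : List (Finset Edge), Even h.length → altUnion b (h ++ l) = altUnion b h ∪ altUnion b l
  | [], _ => (Finset.empty_union _).symm
  | [_], h => absurd h Nat.not_even_one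
  | _ :: _ :: h, hh => by
    have ih := altUnion_append_of_even b l h (by simpa [Nat.even_add_one] using hh)
    cases b <;> simp [altUnion, ih]

theorem allClaimed_eq_union (h : List (Finset Edge)) :
    allClaimed h = firstClaimed h ∪ secondClaimed h := by
  induction h with
  | nil => rfl
  | cons X h ih =>
    change X ∪ allClaimed h = X ∪ altUnion false h ∪ altUnion true h
    rw [ih, firstClaimed, secondClaimed, Finset.union_assoc, Finset.union_comm (altUnion true h)]

variable {board : Set Edge} {h : List (Finset Edge)} {p q : ℕ}

theorem firstClaimed_append_singleton (hh : Even h.length) (X : Finset Edge) :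
    firstClaimed (h ++ [X]) = firstClaimed h ∪ X := by
  simpa [firstClaimed, altUnion] using altUnion_append_of_even true [X] h hh

theorem secondClaimed_append_singleton (hh : Even h.length) (X : Finset Edge) :
    secondClaimed (h ++ [X]) = secondClaimed h := by
  simpa [secondClaimed, altUnion] using altUnion_append_of_even false [X] h hh

theorem firstClaimed_append_pair (hh : Even h.length) (X Y : Finset Edge) :
    firstClaimed (h ++ [X, Y]) = firstClaimed h ∪ X := by
  simpa [firstClaimed, altUnion] using altUnion_append_of_even true [X, Y] h hh

theorem secondClaimed_append_pair (hh : Even h.length) (X Y : Finset Edge) :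
    secondClaimed (h ++ [X, Y]) = secondClaimed h ∪ Y := by
  simpa [secondClaimed, altUnion] using altUnion_append_of_even false [X, Y] h hh

theorem LegalMove.card_le {X : Finset Edge} (hX : LegalMove board h p X) : X.card ≤ p :=
  hX.2.elim Eq.le fun hlt => hlt.1.le

theorem exists_legalMove_superset {Y : Finset Edge}
    (hY : (Y : Set Edge) ⊆ board \ allClaimed h) (hcard : Y.card ≤ q) :
    ∃ Z, LegalMove board h q Z ∧ Y ⊆ Z := by
  rcases le_or_gt (q : ℕ∞) (board \ allClaimed h : Set Edge).encard with hq | hq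
  · obtain ⟨Z, hYZ, hZ, hZcard⟩ :=
      Set.exists_superset_subset_encard_eq hY (by simpa using hcard) hq
    lift Z to Finset Edge using Set.finite_of_encard_eq_coe hZcard
    exact ⟨Z, ⟨hZ, .inl (by simpa using hZcard)⟩, by simpa using hYZ⟩
  · have hfin : (board \ allClaimed h : Set Edge).Finite :=
      Set.finite_of_encard_le_coe hq.le
    lift board \ (allClaimed h : Set Edge) to Finset Edge using hfin with U hU
    exact ⟨U, ⟨hU.le, .inr ⟨by simpa using hq, hU.ge⟩⟩, by simpa using hY⟩

theorem breakerWins_of_invariant {win : Set Edge → Prop} (J : List (Finset Edge) → Prop)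
    (start : J [])
    (reply : ∀ h X, J h → LegalMove board h p X →
      ∃ Y, LegalMove board (h ++ [X]) q Y ∧ J (h ++ [X, Y]))
    (safe : ∀ h, J h → ¬ win (firstClaimed h)) : BreakerWins board win p q := by
  choose! τ hτ using reply
  refine ⟨fun g => τ g.dropLast (g.getLastD ∅), fun σ hσ => ?_⟩
  have invariant : ∀ t, J (hist σ (fun g => τ g.dropLast (g.getLastD ∅)) t) := by
    intro t
    induction t with
    | zero => exact start
    | succ t ih => simpa [hist] using (hτ _ _ ih (hσ t)).2
  exact ⟨fun t => by simpa using (hτ _ _ (invariant t) (hσ t)).1, fun t => safe _ (invariant t)⟩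

theorem exists_legalMove_of_not_responderForces {E : Finset Edge} {W : Finset Edge → Prop}
    (hpq : p ≤ q) (hE : (E : Set Edge) ⊆ board)
    (hW : ¬ ResponderForces E p W (firstClaimed h ∩ E) (secondClaimed h ∩ E)) :
    ∃ Y, LegalMove board h q Y ∧ ∀ X, Disjoint X (allClaimed h ∪ Y) → X.card ≤ p →
      ¬ ResponderForces E p W ((firstClaimed h ∪ X) ∩ E) ((secondClaimed h ∪ Y) ∩ E) := by
  obtain ⟨Y, hY, hblocks⟩ := exists_move_of_not_responderForces hW
  have hY_unclaimed : (Y : Set Edge) ⊆ board \ allClaimed h := by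
    intro e he
    have := hY.subset he
    rw [allClaimed_eq_union]
    exact ⟨hE (by grind), by grind⟩
  obtain ⟨Z, hZ, hYZ⟩ := exists_legalMove_superset hY_unclaimed (hY.card_le.trans hpq)
  refine ⟨Z, hZ, fun X hX hXp hforces => hblocks (X ∩ E) ⟨?_, ?_⟩ ?_⟩
  · rw [allClaimed_eq_union, Finset.disjoint_left] at hX
    grind
  · exact (Finset.card_le_card Finset.inter_subset_left).trans hXp
  · rw [Finset.union_inter_distrib_right] at hforces
    exact hforces.anti_right (by have := hY.subset; grind)

theorem breakerWins_of_disjoint_subgames {ι : Type*} [Fintype ι] {win : Set Edge → Prop}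
    {E : ι → Finset Edge} {W : ι → Finset Edge → Prop} (hpq : p ≤ q) (hp : p < Fintype.card ι)
    (hE : ∀ k, (E k : Set Edge) ⊆ board) (hdisj : Pairwise (Function.onFun Disjoint E))
    (hwin : ∀ (M : Finset Edge) (k : ι), win M → W k (M ∩ E k))
    (hW : ∀ k, ¬ ResponderForces (E k) p (W k) ∅ ∅) : BreakerWins board win p q := by
  let J (h : List (Finset Edge)) : Prop :=
    Even h.length ∧ ∀ X, Disjoint X (allClaimed h) → X.card ≤ p →
      ∃ k, ¬ ResponderForces (E k) p (W k) ((firstClaimed h ∪ X) ∩ E k) (secondClaimed h ∩ E k)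
  refine breakerWins_of_invariant J ⟨Even.zero, fun X _ hX => ?_⟩ ?_ ?_
  · obtain ⟨k, hk⟩ := exists_disjoint_of_card_lt hdisj (hX.trans_lt hp)
    refine ⟨k, ?_⟩
    simpa [firstClaimed, secondClaimed, altUnion, Finset.disjoint_iff_inter_eq_empty.1 hk]
      using hW k
  · rintro h X ⟨heven, hsafe⟩ hX
    have hX_unclaimed : Disjoint X (allClaimed h) :=
      Finset.disjoint_left.2 fun e he => (hX.1 he).2
    obtain ⟨k, hk⟩ := hsafe X hX_unclaimed hX.card_le
    have hk' : ¬ ResponderForces (E k) p (W k)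
        (firstClaimed (h ++ [X]) ∩ E k) (secondClaimed (h ++ [X]) ∩ E k) := by
      rwa [firstClaimed_append_singleton heven, secondClaimed_append_singleton heven]
    obtain ⟨Y, hY, hblocks⟩ := exists_legalMove_of_not_responderForces hpq (hE k) hk'
    refine ⟨Y, hY, by simpa [Nat.even_add_one] using heven, fun X' hX' hX'p => ⟨k, ?_⟩⟩
    have hX'_unclaimed : Disjoint X' (allClaimed (h ++ [X]) ∪ Y) := by
      rwa [allClaimed_eq_union, firstClaimed_append_pair heven, secondClaimed_append_pair heven,
        ← Finset.union_assoc, ← firstClaimed_append_singleton heven,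
        ← secondClaimed_append_singleton heven X, ← allClaimed_eq_union] at hX'
    simpa only [firstClaimed_append_pair heven, secondClaimed_append_pair heven,
      firstClaimed_append_singleton heven, secondClaimed_append_singleton heven]
      using hblocks X' hX'_unclaimed hX'p
  · rintro h ⟨-, hsafe⟩ hh
    obtain ⟨k, hk⟩ := hsafe ∅ (Finset.disjoint_empty_left _) (Nat.zero_le p)
    exact hk (.win (by simpa using hwin _ k hh))

end Histories

section Linked

variable {S : Set Edge} {u v : Vtx} {m n : ℕ}

/-- The vertices `u` and `v` are joined by a path of edges of `S`. -/
def Linked (S : Set Edge) : Vtx → Vtx → Prop :=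
  Relation.EqvGen fun u v => ∃ e ∈ S, ends e = (u, v)

theorem linked_ends {e : Edge} (he : e ∈ S) : Linked S (ends e).1 (ends e).2 :=
  .rel _ _ ⟨e, he, rfl⟩

theorem Linked.of_joins {e : Edge} (he : e ∈ S) (h : joins e u v) : Linked S u v := by
  rcases h with ⟨rfl, rfl⟩ | ⟨rfl, rfl⟩
  · exact linked_ends he
  · exact .symm _ _ (linked_ends he)

theorem Linked.invariant (P : Vtx → Prop) (hP : ∀ e ∈ S, P (ends e).1 ↔ P (ends e).2)
    (h : Linked S u v) : P u ↔ P v := by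
  induction h with
  | rel u v huv =>
    obtain ⟨e, he, hends⟩ := huv
    simpa only [hends] using hP e he
  | refl u => rfl
  | symm u v _ ih => exact ih.symm
  | trans u v w _ _ ihuv ihvw => exact ihuv.trans ihvw

theorem isChain_iff_forall_mem_cp {α : Type*} {R : α → α → Prop} {l : List α} :
    l.IsChain R ↔ ∀ q ∈ cp l, R q.1 q.2 := by
  induction l using List.twoStepInduction <;> simp_all [cp]

theorem HasCrossing.exists_linked (h : HasCrossing m n S) :
    ∃ y ∈ Set.Icc (1 : ℤ) n, ∃ z ∈ Set.Icc (1 : ℤ) n,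
      Linked (S ∩ lamEdges m n) (1, y) (m, z) := by
  obtain ⟨l, ⟨⟨_, y⟩, hhead, rfl⟩, ⟨⟨_, z⟩, hlast, rfl⟩, hl, hedges⟩ := h
  have hchain : l.IsChain (Linked (S ∩ lamEdges m n)) := by
    rw [isChain_iff_forall_mem_cp]
    intro q hq
    obtain ⟨e, he, hjoins⟩ := hedges q hq
    have hmem := List.of_mem_zip hq
    have h1 := hl _ hmem.1
    have h2 := hl _ (List.mem_of_mem_tail hmem.2)
    refine Linked.of_joins ⟨he, ?_⟩ hjoins
    rcases hjoins with ⟨hu, hv⟩ | ⟨hv, hu⟩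
    · exact ⟨hu ▸ h1, hv ▸ h2⟩
    · exact ⟨hv ▸ h2, hu ▸ h1⟩
  have hlinked := hchain.induction (Linked (S ∩ lamEdges m n) (1, y)) l
    (fun _ _ huv hu => .trans _ _ _ hu huv)
    (fun hne => by
      rw [List.head?_eq_some_head hne, Option.some_inj] at hhead
      exact hhead ▸ .refl _)
    _ (List.mem_of_getLast? hlast)
  exact ⟨y, (hl _ (List.mem_of_head? hhead)).2.2, z, (hl _ (List.mem_of_getLast? hlast)).2.2,
    hlinked⟩

end Linked

section Block

variable {a : ℤ} {m n p : ℕ} {S F D : Set Edge}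

/-- The edges of the copy of `S_{(n+1)×n}` occupying the columns `a + 1, …, a + n + 1`. -/
noncomputable def block (a : ℤ) (n : ℕ) : Finset Edge :=
  {e ∈ (Finset.Icc (a + 1) (a + n) ×ˢ Finset.Icc (1 : ℤ) n) ×ˢ Finset.univ |
    e.2 = false → a + 1 < e.1.1 ∧ e.1.2 < n}

theorem mem_block {e : Edge} :
    e ∈ block a n ↔ ((a + 1 ≤ e.1.1 ∧ e.1.1 ≤ a + n) ∧ 1 ≤ e.1.2 ∧ e.1.2 ≤ n) ∧
      (e.2 = false → a + 1 < e.1.1 ∧ e.1.2 < n) := by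
  simp [block]

theorem block_subset_sEdges (ha : 0 ≤ a) (ham : a + n + 1 ≤ m) :
    (block a n : Set Edge) ⊆ sEdges m n := by
  rintro ⟨⟨x, y⟩, _ | _⟩ he <;>
    simp_all [mem_block, sEdges, lamEdges, lamVtx, ends] <;> omega

theorem disjoint_block {b : ℤ} (hab : a + n ≤ b) : Disjoint (block a n) (block b n) := by
  rw [Finset.disjoint_left]
  intro e hea heb
  rw [mem_block] at hea heb
  omega

/-- `S` contains a left-right crossing of the block at offset `a`. -/
def CrossesBlock (a : ℤ) (n : ℕ) (S : Set Edge) : Prop :=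
  ∃ y ∈ Set.Icc (1 : ℤ) n, ∃ z ∈ Set.Icc (1 : ℤ) n,
    Linked (S ∩ block a n) (a + 1, y) (a + n + 1, z)

/-- Otherwise the part of the board left of the block together with everything linked to the left
side of the block would be closed under the edges of `S`. -/
theorem HasCrossing.crossesBlock (ha : 0 ≤ a) (ham : a + n + 1 ≤ m) (h : HasCrossing m n S) :
    CrossesBlock a n S := by
  by_contra hcross
  obtain ⟨y, hy, z, -, hlinked⟩ := h.exists_linked
  let R (v : Vtx) : Prop := ∃ y ∈ Set.Icc (1 : ℤ) n, Linked (S ∩ block a n) (a + 1, y) v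
  have R_left {y : ℤ} (hy1 : 1 ≤ y) (hyn : y ≤ n) : R (a + 1, y) := ⟨y, ⟨hy1, hyn⟩, .refl _⟩
  have R_right {z : ℤ} (hz1 : 1 ≤ z) (hzn : z ≤ n) : ¬ R (a + n + 1, z) := fun ⟨y, hy, hyz⟩ =>
    hcross ⟨y, hy, z, ⟨hz1, hzn⟩, hyz⟩
  have R_ends {e : Edge} (he : e ∈ S ∩ block a n) : R (ends e).1 ↔ R (ends e).2 :=
    exists_congr fun y => and_congr_right fun _ =>
      ⟨fun h => .trans _ _ _ h (linked_ends he),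
        fun h => .trans _ _ _ h (.symm _ _ (linked_ends he))⟩
  have closed := hlinked.invariant (fun v => v.1 ≤ a + n ∧ (v.1 ≤ a + 1 ∨ R v)) ?_
  · have := closed.1 ⟨by grind, by grind⟩
    grind
  rintro ⟨⟨x, y⟩, _ | _⟩ ⟨heS, ⟨-, -, hy1, -⟩, -, -, -, hyn⟩
  · refine and_congr_right fun hxn => or_congr_right' fun hxa => ?_
    exact R_ends ⟨heS, by grind [mem_block, ends]⟩
  · by_cases hx : a + 1 ≤ x ∧ x ≤ a + n
    · have := R_ends (e := ((x, y), true)) ⟨heS, by grind [mem_block, ends]⟩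
      grind [ends]
    · grind [ends]

/-- The edge whose dual is `e`, once the planar dual of the block at offset `a` is identified with
the block by a reflection. -/
def dualEdge (a : ℤ) : Edge → Edge
  | ((x, y), true) => ((y + a, x - a), true)
  | ((x, y), false) => ((y + (a + 1), x - (a + 1)), false)

theorem dualEdge_involutive (a : ℤ) : Function.Involutive (dualEdge a) := by
  rintro ⟨⟨x, y⟩, _ | _⟩ <;> simp [dualEdge]

theorem dualEdge_mem_block {e : Edge} : dualEdge a e ∈ block a n ↔ e ∈ block a n := by
  obtain ⟨⟨x, y⟩, _ | _⟩ := e <;> simp only [mem_block, dualEdge] <;> grind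

/-- What is needed of the function `φ` for which `φ x y` counts, with signs, the crossings of row
`y` to the left of column `x` by a path of dual edges in `D` from the bottom of the block to the
dual vertex `c`. A dual vertex is a unit square, encoded by its upper left corner. -/
structure IsPotential (a : ℤ) (n : ℕ) (D : Set Edge) (c : Vtx) (φ : ℤ → ℤ → ℤ) : Prop where
  left : ∀ y, φ (a + 1) y = 0
  right : ∀ y, 1 ≤ y → φ (a + n + 1) y = if y < c.2 then 1 else 0
  horizontal : ∀ x y, ((x, y), true) ∉ D → φ (x + 1) y = φ x y
  vertical : ∀ x y, 1 ≤ y → ((x, y), false) ∉ D →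
    φ x (y + 1) = φ x y - if c.1 < x ∧ y + 1 = c.2 then 1 else 0

theorem isPotential_zero {x : ℤ} : IsPotential a n D (x, 1) 0 := by
  constructor <;> intros <;> simp <;> omega

theorem isPotential_iff_of_vertical_mem {x y : ℤ} {φ : ℤ → ℤ → ℤ} (hD : ((x, y), false) ∈ D) :
    IsPotential a n D (x - 1, y + 1) φ ↔ IsPotential a n D (x, y + 1) φ := by
  constructor <;> rintro ⟨left, right, horizontal, vertical⟩ <;>
    refine ⟨left, right, horizontal, fun x' y' hy' he => ?_⟩ <;>
    have := vertical x' y' hy' he <;> grind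

theorem isPotential_iff_of_horizontal_mem {x y : ℤ} {φ : ℤ → ℤ → ℤ} (hD : ((x, y), true) ∈ D)
    (hax : a + 1 ≤ x) (hxa : x ≤ a + n) :
    IsPotential a n D (x, y) φ ↔ IsPotential a n D (x, y + 1)
      fun x' y' => φ x' y' + if x < x' ∧ y' = y then 1 else 0 := by
  have ne_of_notMem {x' y' : ℤ} (he : ((x', y'), true) ∉ D) : ¬ (x' = x ∧ y' = y) := by
    rintro ⟨rfl, rfl⟩
    exact he hD
  constructor <;> rintro ⟨left, right, horizontal, vertical⟩ <;>
    refine ⟨fun y' => ?_, fun y' hy' => ?_, fun x' y' he => ?_, fun x' y' hy' he => ?_⟩ <;>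
    beta_reduce at *
  · grind
  · grind
  · grind
  · specialize vertical x' y' hy' he
    split_ifs at * <;> omega
  · grind
  · grind
  · grind
  · specialize vertical x' y' hy' he
    split_ifs at * <;> omega

theorem CrossesBlock.exists_isPotential (h : CrossesBlock a n (dualEdge a ⁻¹' D)) :
    ∃ x φ, IsPotential a n D (x, n + 1) φ := by
  obtain ⟨y, -, z, -, hlinked⟩ := h
  have transport := hlinked.invariant (fun w => ∃ φ, IsPotential a n D (w.2 + a, w.1 - a) φ) ?_
  · refine ⟨z + a, ?_⟩
    simpa [add_sub_right_comm] using transport.1 ⟨0, by simpa using isPotential_zero⟩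
  rintro ⟨⟨x, y⟩, _ | _⟩ ⟨heD, he⟩
  · replace heD : ((y + (a + 1), x - (a + 1)), false) ∈ D := heD
    change (∃ φ, IsPotential a n D (y + a, x - a) φ) ↔
      ∃ φ, IsPotential a n D (y + 1 + a, x - a) φ
    convert exists_congr fun φ => isPotential_iff_of_vertical_mem heD using 5 <;> ring
  · replace heD : ((y + a, x - a), true) ∈ D := heD
    obtain ⟨hax, hxa⟩ := (mem_block.1 (dualEdge_mem_block.2 he)).1.1
    change (∃ φ, IsPotential a n D (y + a, x - a) φ) ↔
      ∃ φ, IsPotential a n D (y + a, x + 1 - a) φ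
    rw [add_sub_right_comm]
    exact (Equiv.addRight _).exists_congr fun φ => isPotential_iff_of_horizontal_mem heD hax hxa

theorem CrossesBlock.not_crossesBlock_dualEdge (h : CrossesBlock a n F) (hFD : Disjoint F D) :
    ¬ CrossesBlock a n (dualEdge a ⁻¹' D) := by
  intro hdual
  obtain ⟨x, φ, hφ⟩ := hdual.exists_isPotential
  obtain ⟨y, -, z, ⟨hz1, hzn⟩, hlinked⟩ := h
  have φ_end : φ (a + n + 1) z = 1 := by
    rw [hφ.right z hz1, if_pos (by grind)]
  have φ_const := hlinked.invariant (fun v => φ v.1 v.2 = 0) ?_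
  · grind [hφ.left y]
  rintro ⟨⟨x, y⟩, _ | _⟩ ⟨heF, he⟩
  · have := hφ.vertical x y (mem_block.1 he).1.2.1 (hFD.notMem_of_mem_left heF)
    have := (mem_block.1 he).2 rfl
    grind [ends]
  · have := hφ.horizontal x y (hFD.notMem_of_mem_left heF)
    grind [ends]

theorem not_responderForces_block :
    ¬ ResponderForces (block a n) p (fun S => CrossesBlock a n S) ∅ ∅ := by
  refine not_responderForces_of_selfDual (dualEdge_involutive a).toPerm ?_ fun F D hFD hF => ?_
  · ext e
    simp [Finset.mem_map_equiv, dualEdge_mem_block]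
  · have coe_map : (D.map (dualEdge_involutive a).toPerm.symm.toEmbedding : Set Edge) =
        dualEdge a ⁻¹' D := by
      ext e
      rw [Finset.mem_coe, Finset.mem_map_equiv]
      rfl
    rw [coe_map]
    exact hF.not_crossesBlock_dualEdge (Finset.disjoint_coe.2 hFD)

end Block

theorem breaker_wins_balanced_game_on_long_board_general
    (m n p q : ℕ) (hpq : p ≤ q) (hmn : (p + 1) * (n + 1) ≤ m) :
    BreakerWins (sEdges m n) (HasCrossing m n) p q := by
  have fits (k : Fin (p + 1)) : (k * (n + 1) : ℤ) + n + 1 ≤ m := by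
    have := k.is_le
    nlinarith
  refine breakerWins_of_disjoint_subgames (E := fun k : Fin (p + 1) => block (k * (n + 1)) n)
    (W := fun k S => CrossesBlock (k * (n + 1)) n S) hpq (by simp)
    (fun k => block_subset_sEdges (by positivity) (fits k)) ?_ (fun M k hM => ?_)
    (fun k => not_responderForces_block)
  · refine (pairwise_disjoint_on _).2 fun k l hkl => disjoint_block ?_
    have : (k : ℤ) + 1 ≤ l := by exact_mod_cast hkl
    nlinarith
  · simpa [CrossesBlock, Set.inter_assoc] using hM.crossesBlock (by positivity) (fits k)

/-- **Proposition (ii).** For all (positive) natural numbers `m, n, p` with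
`m ≥ (p+1)(n+1)`, Breaker has a winning strategy for the `(p,p)`-crossing game
on `S_{m×n}`. -/
theorem breaker_wins_balanced_game_on_long_board
    (m n p : ℕ) (hn : 1 ≤ n) (hp : 1 ≤ p) (hmn : (p + 1) * (n + 1) ≤ m) :
    BreakerWins (sEdges m n) (HasCrossing m n) p p :=
  breaker_wins_balanced_game_on_long_board_general m n p p le_rfl hmn

end CrossingGames
end

section
/- Suppose a and b are vertices of a finite multigraph G such that G has a 2-positive subgraph containing both a and b. Then Join has a winning strategy for the Shannon switching game played on (G,a,b). -/
namespace ShannonSwitching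

variable {V E : Type}

/-- `u` is joined to `v` by a walk using only edges from `F`, in the multigraph with
edge-endpoint map `ends`. -/
def Reach (ends : E → V × V) (F : Set E) (u v : V) : Prop :=
  Relation.ReflTransGen
    (fun a b => ∃ e ∈ F,
      ((ends e).1 = a ∧ (ends e).2 = b) ∨ ((ends e).1 = b ∧ (ends e).2 = a)) u v

/-- The subgraph `(V', E')` of the multigraph is `k`-positive: it contains `k` pairwise
edge-disjoint connected spanning subgraphs. -/
def kPositive (ends : E → V × V) (V' : Set V) (E' : Set E) (k : ℕ) : Prop :=
  ∃ F : Fin k → Set E,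
    (∀ i, F i ⊆ E') ∧
    (Pairwise fun i j => Disjoint (F i) (F j)) ∧
    ∀ i, ∀ u ∈ V', ∀ v ∈ V', Reach ends (F i) u v

/-- A strategy in the Shannon switching game: given the list of all moves played so far
(oldest first), produce the next move (a finite set of edges). -/
abbrev SStrategy (E : Type) : Type := List (Finset E) → Finset E

variable [DecidableEq E]

/-- The union of the moves sitting in positions of the given parity of a history. -/
def altUnion : Bool → List (Finset E) → Finset E
  | _, [] => ∅
  | true, mv :: h => mv ∪ altUnion false h
  | false, _ :: h => altUnion true h

/-- All edges claimed by the player moving first in a history. -/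
def firstClaimed (h : List (Finset E)) : Finset E := altUnion true h

/-- All edges claimed by the player moving second in a history. -/
def secondClaimed (h : List (Finset E)) : Finset E := altUnion false h

/-- All edges claimed so far in a history. -/
def allClaimed (h : List (Finset E)) : Finset E := h.foldr (· ∪ ·) ∅

/-- The history of moves (oldest first) after `t` full rounds, when the player moving
first uses strategy `σ` and the player moving second uses strategy `τ`. -/
def hist (σ τ : SStrategy E) : ℕ → List (Finset E)
  | 0 => []
  | t + 1 =>
    let h := hist σ τ t
    h ++ [σ h, τ (h ++ [σ h])]

/-- The move `mv` is legal on `board` after the history `h` for a player of bias `k`: it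
consists of as-yet-unclaimed edges of the board, exactly `k` of them unless fewer than
`k` unclaimed edges remain, in which case the player takes all of them. -/
def LegalMove (board : Set E) (h : List (Finset E)) (k : ℕ) (mv : Finset E) : Prop :=
  (↑mv : Set E) ⊆ board \ ↑(allClaimed h) ∧
    (mv.card = k ∨ (mv.card < k ∧ board \ ↑(allClaimed h) ⊆ (↑mv : Set E)))

/-- The player moving first (with bias `k`) always moves legally when playing `σ`
against `τ`. -/
def FirstLegal (board : Set E) (k : ℕ) (σ τ : SStrategy E) : Prop :=
  ∀ t, LegalMove board (hist σ τ t) k (σ (hist σ τ t))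

/-- The player moving second (with bias `k`) always moves legally when playing `τ`
against `σ`. -/
def SecondLegal (board : Set E) (k : ℕ) (σ τ : SStrategy E) : Prop :=
  ∀ t, LegalMove board (hist σ τ t ++ [σ (hist σ τ t)]) k
    (τ (hist σ τ t ++ [σ (hist σ τ t)]))

/-- Join has a winning strategy for the `(k,k)`-Shannon switching game on `(G,a,b)`:
Cut moves first, deleting `k` unsafe edges per turn, Join answers by marking `k` unsafe
edges as safe per turn, and Join can guarantee that when all edges have been used up her
safe edges contain a path from `a` to `b` (equivalently, that at some point the safe
edges contain such a path, since safe edges only accumulate). -/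
def JoinWins (ends : E → V × V) (a b : V) (k : ℕ) : Prop :=
  ∃ τ : SStrategy E, ∀ σ : SStrategy E,
    FirstLegal (Set.univ : Set E) k σ τ →
      SecondLegal (Set.univ : Set E) k σ τ ∧
      ∃ t, Reach ends (↑(secondClaimed (hist σ τ t)) : Set E) a b

/-!
Let `S` be the set of safe edges. Join keeps two disjoint sets `A` and `B` of unclaimed edges such
that `A ∪ S` and `B ∪ S` both connect all the vertices of the given subgraph. If Cut deletes an
edge of `A` and this splits `A ∪ S` into two parts, then `B ∪ S` has an edge between these parts.
It is not in `S`, so it lies in `B`; marking it safe reconnects the two parts, and moving it from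
`B` to `S` leaves `B ∪ S` unchanged. When there is nothing to repair, any edge of `B` will do. Every
round uses up an edge of `A ∪ B`, so `S` alone ends up connecting `a` and `b`, even if the rest of
the board is infinite.
-/

section Graph

omit [DecidableEq E]

variable {ends : E → V × V} {F G H : Set E} {V' : Set V} {e : E} {u v : V}

/-- The edge `e` has endpoints `u` and `v`, in either order: one step of the walks in `Reach`. -/
def IsLink (ends : E → V × V) (e : E) (u v : V) : Prop :=
  ((ends e).1 = u ∧ (ends e).2 = v) ∨ ((ends e).1 = v ∧ (ends e).2 = u)

theorem IsLink.reach (h : IsLink ends e u v) (he : e ∈ F) : Reach ends F u v :=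
  .single ⟨e, he, h⟩

theorem Reach.symm (h : Reach ends F u v) : Reach ends F v u :=
  (@Relation.ReflTransGen.stdSymm _ _ ⟨fun _ _ ⟨e, he, hlink⟩ => ⟨e, he, hlink.symm⟩⟩).symm _ _ h

theorem Reach.of_forall_mem (hFG : ∀ e ∈ F, Reach ends G (ends e).1 (ends e).2)
    (h : Reach ends F u v) : Reach ends G u v := by
  refine Relation.reflTransGen_closed ?_ _ _ h
  rintro _ _ ⟨e, he, ⟨rfl, rfl⟩ | ⟨rfl, rfl⟩⟩
  · exact hFG e he
  · exact (hFG e he).symm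

theorem Reach.mono (hFG : F ⊆ G) (h : Reach ends F u v) : Reach ends G u v :=
  h.of_forall_mem fun _ he => IsLink.reach (.inl ⟨rfl, rfl⟩) (hFG he)

theorem Reach.exists_isLink_crossing {P : Set V} (h : Reach ends F u v) (hu : u ∈ P)
    (hv : v ∉ P) : ∃ e ∈ F, ∃ p ∈ P, ∃ q ∉ P, IsLink ends e p q := by
  induction h with
  | refl => exact absurd hu hv
  | @tail p q _ hpq ih =>
    obtain ⟨e, he, hlink⟩ := hpq
    by_cases hp : p ∈ P
    · exact ⟨e, he, p, hp, q, hv, hlink⟩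
    · exact ih hp

theorem Reach.exists_finset_subset (h : Reach ends F u v) :
    ∃ A : Finset E, ↑A ⊆ F ∧ Reach ends A u v := by
  classical
  induction h with
  | refl => exact ⟨∅, by simp, .refl⟩
  | tail _ hpq ih =>
    obtain ⟨A, hAF, hA⟩ := ih
    obtain ⟨e, he, hlink⟩ := hpq
    refine ⟨insert e A, ?_, .tail (hA.mono ?_) ⟨e, by simp, hlink⟩⟩
    · simpa [Set.insert_subset_iff] using ⟨he, hAF⟩
    · simp

theorem Reach.reach_endpoint_of_insert (h : Reach ends (insert e H) u v)
    (hH : ¬ Reach ends H u v) : Reach ends H u (ends e).1 ∨ Reach ends H u (ends e).2 := by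
  obtain ⟨g, hg, p, hp, q, hq, hlink⟩ :=
    h.exists_isLink_crossing (P := {w | Reach ends H u w}) .refl hH
  obtain rfl | hgH := hg
  · obtain ⟨rfl, -⟩ | ⟨-, rfl⟩ := hlink
    · exact .inl hp
    · exact .inr hp
  · exact absurd (hp.trans (hlink.reach hgH)) hq

theorem Reach.exchange (h : Reach ends (insert e H) u v) (hH : ¬ Reach ends H u v)
    (hHG : H ⊆ G) (hG : Reach ends G u v) : Reach ends G (ends e).1 (ends e).2 := by
  have hu := h.reach_endpoint_of_insert hH
  have hv := h.symm.reach_endpoint_of_insert fun h' => hH h'.symm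
  obtain hu | hu := hu <;> obtain hv | hv := hv
  · exact absurd (hu.trans hv.symm) hH
  · exact ((hu.mono hHG).symm.trans hG).trans (hv.mono hHG)
  · exact ((hv.mono hHG).symm.trans hG.symm).trans (hu.mono hHG)
  · exact absurd (hu.trans hv.symm) hH

/-- The edges of `F` connect all the vertices of `V'`, as required of each of the subgraphs in
`kPositive`. Walks may leave `V'`. -/
def Connects (ends : E → V × V) (F : Set E) (V' : Set V) : Prop :=
  ∀ u ∈ V', ∀ v ∈ V', Reach ends F u v

theorem Connects.mono (hFG : F ⊆ G) (hF : Connects ends F V') : Connects ends G V' :=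
  fun u hu v hv => (hF u hu v hv).mono hFG

theorem Connects.exists_finset_subset (hV' : V'.Finite) (hF : Connects ends F V') :
    ∃ A : Finset E, ↑A ⊆ F ∧ Connects ends A V' := by
  classical
  have hwalk : ∀ p : V' × V', ∃ A : Finset E, ↑A ⊆ F ∧ Reach ends A p.1 p.2 :=
    fun p => (hF _ p.1.2 _ p.2.2).exists_finset_subset
  choose A hAF hA using hwalk
  have := hV'.fintype
  refine ⟨Finset.univ.biUnion A, by simpa using hAF, fun u hu v hv => ?_⟩
  exact (hA (⟨u, hu⟩, ⟨v, hv⟩)).mono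
    (Finset.coe_subset.2 (Finset.subset_biUnion_of_mem A (Finset.mem_univ _)))

theorem Connects.exchange (heH : Connects ends (insert e H) V') (hH : ¬ Connects ends H V')
    (hG : Connects ends G V') (hGV' : ∀ f ∈ G \ H, (ends f).1 ∈ V' ∧ (ends f).2 ∈ V') :
    ∃ f ∈ G \ H, Connects ends (insert f H) V' := by
  unfold Connects at hH
  push Not at hH
  obtain ⟨u, hu, v, hv, huv⟩ := hH
  obtain ⟨f, hfG, p, hp, q, hq, hlink⟩ :=
    (hG u hu v hv).exists_isLink_crossing (P := {w | Reach ends H u w}) .refl huv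
  have hfH : f ∉ H := fun hf => hq (hp.trans (hlink.reach hf))
  have hqV' : q ∈ V' := by
    obtain ⟨-, rfl⟩ | ⟨rfl, -⟩ := hlink
    · exact (hGV' f ⟨hfG, hfH⟩).2
    · exact (hGV' f ⟨hfG, hfH⟩).1
  have hsub : H ⊆ insert f H := Set.subset_insert f H
  have huq : Reach ends (insert f H) u q :=
    (hp.mono hsub).trans (hlink.reach (Set.mem_insert f H))
  have he : Reach ends (insert f H) (ends e).1 (ends e).2 :=
    (heH u hu q hqV').exchange hq hsub huq
  refine ⟨f, ⟨hfG, hfH⟩, fun x hx y hy => (heH x hx y hy).of_forall_mem ?_⟩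
  rintro g (rfl | hg)
  · exact he
  · exact IsLink.reach (.inl ⟨rfl, rfl⟩) (hsub hg)

end Graph

section Reserve

variable {ends : E → V × V} {V' : Set V} {n : ℕ} {X S A B D : Finset E}

/-- When `X` is the set of claimed edges and `S` the set of safe ones, `A` is a set of unclaimed
edges between vertices of `V'` which would connect `V'` if all of them were made safe. -/
structure IsReserve (ends : E → V × V) (V' : Set V) (X S A : Finset E) : Prop where
  disjoint : Disjoint A X
  endpoints : ∀ e ∈ A, (ends e).1 ∈ V' ∧ (ends e).2 ∈ V'
  connects : Connects ends (A ∪ S : Finset E) V'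

/-- Join's invariant before a move of Cut: two disjoint reserves with at most `n` edges in total are
available. They lose an edge in every round until `S` connects `V'`, so `n` bounds the number of
rounds Join still needs. -/
def JoinAhead (ends : E → V × V) (V' : Set V) (n : ℕ) (X S : Finset E) : Prop :=
  ∃ A B, IsReserve ends V' X S A ∧ IsReserve ends V' X S B ∧ Disjoint A B ∧ (A ∪ B).card ≤ n

theorem JoinAhead.mono {m : ℕ} (hmn : m ≤ n) (h : JoinAhead ends V' m X S) :
    JoinAhead ends V' n X S := by
  obtain ⟨A, B, hA, hB, hAB, hcard⟩ := h
  exact ⟨A, B, hA, hB, hAB, hcard.trans hmn⟩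

theorem Connects.joinAhead (h : Connects ends S V') : JoinAhead ends V' n X S := by
  have hempty : IsReserve ends V' X S ∅ := ⟨by simp, by simp, by simpa using h⟩
  exact ⟨∅, ∅, hempty, hempty, by simp, by simp⟩

theorem JoinAhead.connects (h : JoinAhead ends V' 0 X S) : Connects ends S V' := by
  obtain ⟨A, B, hA, -, -, hcard⟩ := h
  have hempty : A = ∅ := by simp_all
  simpa [hempty] using hA.connects

theorem IsReserve.exists_repair (hA : IsReserve ends V' X S A) (hB : IsReserve ends V' X S B)
    (hD : D.card ≤ 1) (hS : ¬ Connects ends S V') :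
    ∃ f ∈ B, Connects ends (insert f (A \ D ∪ S) : Finset E) V' := by
  have hne : B.Nonempty := by
    rw [Finset.nonempty_iff_ne_empty]
    rintro rfl
    exact hS (by simpa using hB.connects)
  obtain ⟨f, hf⟩ := hne
  by_cases hAD : Connects ends (A \ D ∪ S : Finset E) V'
  · exact ⟨f, hf, hAD.mono (by simp)⟩
  · have : Nonempty E := ⟨f⟩
    obtain ⟨e, hDe⟩ := Finset.card_le_one_iff_subset_singleton.1 hD
    have hsub : A ∪ S ⊆ insert e (A \ D ∪ S) := by grind
    have hins : Connects ends (insert e ↑(A \ D ∪ S : Finset E)) V' := by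
      simpa using hA.connects.mono (Finset.coe_subset.2 hsub)
    have hmem : ∀ g ∈ (↑(B ∪ S) : Set E) \ ↑(A \ D ∪ S), g ∈ B := by grind
    obtain ⟨g, hg, hconn⟩ :=
      hins.exchange hAD hB.connects fun g hg => hB.endpoints g (hmem g hg)
    exact ⟨g, hmem g hg, by simpa using hconn⟩

theorem IsReserve.exists_joinAhead_insert (hA : IsReserve ends V' X S A)
    (hB : IsReserve ends V' X S B) (hAB : Disjoint A B) (hDB : Disjoint D B) (hD : D.card ≤ 1)
    (hS : ¬ Connects ends S V') :
    ∃ f ∉ X ∪ D, JoinAhead ends V' ((A ∪ B).card - 1) (insert f (X ∪ D)) (insert f S) := by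
  obtain ⟨f, hfB, hf⟩ := hA.exists_repair hB hD hS
  have hfA : f ∉ A := Finset.disjoint_right.1 hAB hfB
  have hfXD : f ∉ X ∪ D := by
    simp [Finset.disjoint_left.1 hB.disjoint hfB, Finset.disjoint_right.1 hDB hfB]
  have hA' : IsReserve ends V' (insert f (X ∪ D)) (insert f S) (A \ D) := by
    refine ⟨?_, fun e he => hA.endpoints e (Finset.sdiff_subset he), by rwa [Finset.union_insert]⟩
    have hAX := hA.disjoint
    rw [Finset.disjoint_left] at hAX ⊢
    grind
  have hB' : IsReserve ends V' (insert f (X ∪ D)) (insert f S) (B.erase f) := by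
    refine ⟨?_, fun e he => hB.endpoints e (Finset.erase_subset f B he), ?_⟩
    · have hBX := hB.disjoint
      rw [Finset.disjoint_left] at hBX hDB ⊢
      grind
    · rw [Finset.union_insert, ← Finset.insert_union, Finset.insert_erase hfB]
      exact hB.connects
  have hsub : A \ D ∪ B.erase f ⊆ (A ∪ B).erase f := by grind
  refine ⟨f, hfXD, A \ D, B.erase f, hA', hB', ?_, ?_⟩
  · exact hAB.mono Finset.sdiff_subset (Finset.erase_subset f B)
  · rw [← Finset.card_erase_of_mem (Finset.mem_union_right A hfB)]
    exact Finset.card_le_card hsub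

theorem JoinAhead.exists_insert (h : JoinAhead ends V' n X S) (hD : D.card ≤ 1)
    (hS : ¬ Connects ends S V') :
    ∃ f ∉ X ∪ D, JoinAhead ends V' (n - 1) (insert f (X ∪ D)) (insert f S) := by
  obtain ⟨A, B, hA, hB, hAB, hcard⟩ := h
  have hDAB : Disjoint D A ∨ Disjoint D B := by
    by_contra! hmeet
    obtain ⟨x, hxD, hxA⟩ := Finset.not_disjoint_iff.1 hmeet.1
    obtain ⟨y, hyD, hyB⟩ := Finset.not_disjoint_iff.1 hmeet.2
    have hxy := Finset.card_le_one.1 hD x hxD y hyD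
    exact Finset.disjoint_left.1 hAB hxA (hxy ▸ hyB)
  obtain hDA | hDB := hDAB
  · obtain ⟨f, hf, hahead⟩ := hB.exists_joinAhead_insert hA hAB.symm hDA hD hS
    rw [Finset.union_comm] at hahead
    exact ⟨f, hf, hahead.mono (by omega)⟩
  · obtain ⟨f, hf, hahead⟩ := hA.exists_joinAhead_insert hB hAB hDB hD hS
    exact ⟨f, hf, hahead.mono (by omega)⟩

end Reserve

section Game

variable {board : Set E} {k : ℕ}

theorem allClaimed_append (h l : List (Finset E)) :
    allClaimed (h ++ l) = allClaimed h ∪ allClaimed l := by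
  induction h with
  | nil => simp [allClaimed]
  | cons D h ih => simpa [allClaimed, Finset.union_assoc] using congrArg (D ∪ ·) ih

theorem altUnion_append (b : Bool) :
    ∀ (h l : List (Finset E)), Even h.length → altUnion b (h ++ l) = altUnion b h ∪ altUnion b l
  | [], l, _ => by cases b <;> simp [altUnion]
  | [D], l, hh => by simp at hh
  | D :: D' :: h, l, hh => by
    have ih := altUnion_append b h l (by simpa [Nat.even_add_one] using hh)
    cases b <;> simp only [List.cons_append, altUnion, ih, Finset.union_assoc]

omit [DecidableEq E] in
theorem length_hist (σ τ : SStrategy E) (t : ℕ) : (hist σ τ t).length = 2 * t := by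
  induction t with
  | zero => rfl
  | succ t ih => simp [hist, ih, mul_add]

theorem exists_legalMove (board : Set E) (h : List (Finset E)) (k : ℕ) :
    ∃ D, LegalMove board h k D := by
  obtain hk | hk := le_total (k : ℕ∞) (board \ ↑(allClaimed h)).encard
  · obtain ⟨D, hD, hcard⟩ := Set.exists_subset_encard_eq hk
    have hfin : D.Finite := Set.finite_of_encard_eq_coe hcard
    lift D to Finset E using hfin
    exact ⟨D, hD, .inl (by simpa using hcard)⟩
  · have hfin := Set.finite_of_encard_le_coe hk
    rw [hfin.encard_eq_coe_toFinset_card, Nat.cast_le] at hk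
    refine ⟨hfin.toFinset, by simp, ?_⟩
    obtain heq | hlt := hk.eq_or_lt
    · exact .inl heq
    · exact .inr ⟨hlt, by simp⟩

theorem exists_strategy_of_invariant (P : List (Finset E) → Prop) (hnil : P [])
    (hreply : ∀ h D, P h → LegalMove board h k D →
      ∃ D', LegalMove board (h ++ [D]) k D' ∧ P (h ++ [D, D'])) :
    ∃ τ : SStrategy E, ∀ σ : SStrategy E, FirstLegal board k σ τ →
      SecondLegal board k σ τ ∧ ∀ t, P (hist σ τ t) := by
  let τ (h : List (Finset E)) : Finset E :=
    Classical.epsilon fun D => LegalMove board h k D ∧ P (h ++ [D])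
  have hτ (h) (hh : ∃ D, LegalMove board h k D ∧ P (h ++ [D])) :
      LegalMove board h k (τ h) ∧ P (h ++ [τ h]) :=
    Classical.epsilon_spec hh
  refine ⟨τ, fun σ hσ => ?_⟩
  have hround (t : ℕ) (ht : P (hist σ τ t)) :=
    hτ (hist σ τ t ++ [σ (hist σ τ t)]) (by simpa using hreply _ _ ht (hσ t))
  have hP : ∀ t, P (hist σ τ t) := fun t => by
    induction t with
    | zero => exact hnil
    | succ t ih => simpa [hist] using (hround t ih).2
  exact ⟨fun t => (hround t (hP t)).1, hP⟩

variable {ends : E → V × V} {V' : Set V} {n : ℕ} {h : List (Finset E)} {D : Finset E}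

theorem JoinAhead.exists_reply
    (hahead : JoinAhead ends V' n (allClaimed h) (secondClaimed h)) (hh : Even h.length)
    (hD : D.card ≤ 1) :
    ∃ D', LegalMove Set.univ (h ++ [D]) 1 D' ∧ JoinAhead ends V' (n - 1)
      (allClaimed (h ++ [D, D'])) (secondClaimed (h ++ [D, D'])) := by
  have hclaimed : allClaimed (h ++ [D]) = allClaimed h ∪ D := by
    rw [allClaimed_append]
    simp [allClaimed]
  have hclaimed' (D') : allClaimed (h ++ [D, D']) = allClaimed h ∪ D ∪ D' := by
    rw [allClaimed_append]
    simp [allClaimed]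
  have hsafe (D') : secondClaimed (h ++ [D, D']) = secondClaimed h ∪ D' := by
    simp [secondClaimed, altUnion_append _ _ _ hh, altUnion]
  by_cases hS : Connects ends (secondClaimed h) V'
  · obtain ⟨D', hD'⟩ := exists_legalMove Set.univ (h ++ [D]) 1
    refine ⟨D', hD', (hS.mono ?_).joinAhead⟩
    simp [hsafe]
  · obtain ⟨f, hf, hahead'⟩ := hahead.exists_insert hD hS
    refine ⟨{f}, ⟨by simpa [hclaimed] using hf, .inl (by simp)⟩, ?_⟩
    simpa [hclaimed', hsafe] using hahead'

theorem JoinAhead.joinWins {a b : V} (hahead : JoinAhead ends V' n ∅ ∅) (ha : a ∈ V')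
    (hb : b ∈ V') : JoinWins ends a b 1 := by
  let P (h : List (Finset E)) : Prop := Even h.length ∧
    JoinAhead ends V' (n - h.length / 2) (allClaimed h) (secondClaimed h)
  have hnil : P [] := ⟨by simp, by simpa [allClaimed, secondClaimed, altUnion] using hahead⟩
  have hreply (h D) (hP : P h) (hD : LegalMove Set.univ h 1 D) :
      ∃ D', LegalMove Set.univ (h ++ [D]) 1 D' ∧ P (h ++ [D, D']) := by
    have hcard : D.card ≤ 1 := hD.2.elim Eq.le fun hlt => hlt.1.le
    obtain ⟨D', hD', hahead'⟩ := hP.2.exists_reply hP.1 hcard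
    refine ⟨D', hD', by simpa [Nat.even_add] using hP.1, ?_⟩
    simpa [Nat.sub_sub] using hahead'
  obtain ⟨τ, hτ⟩ := exists_strategy_of_invariant P hnil hreply
  refine ⟨τ, fun σ hσ => ⟨(hτ σ hσ).1, n, ?_⟩⟩
  have hend := ((hτ σ hσ).2 n).2
  rw [length_hist, Nat.mul_div_cancel_left n two_pos, Nat.sub_self] at hend
  exact hend.connects a ha b hb

end Game

theorem join_wins_shannon_switching_game_general {V E : Type} [DecidableEq E]
    (ends : E → V × V) (a b : V)
    (hpos : ∃ (V' : Set V) (E' : Set E), V'.Finite ∧ a ∈ V' ∧ b ∈ V' ∧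
      (∀ e ∈ E', (ends e).1 ∈ V' ∧ (ends e).2 ∈ V') ∧
      kPositive ends V' E' 2) :
    JoinWins ends a b 1 := by
  obtain ⟨V', E', hV', ha, hb, hE', F, hFE', hdisj, hF⟩ := hpos
  have hreserve : ∀ i, ∃ A : Finset E, ↑A ⊆ F i ∧ IsReserve ends V' ∅ ∅ A := fun i => by
    obtain ⟨A, hAF, hA⟩ := Connects.exists_finset_subset hV' (hF i)
    exact ⟨A, hAF, by simp, fun e he => hE' e (hFE' i (hAF he)), by simpa using hA⟩
  obtain ⟨A, hAF, hA⟩ := hreserve 0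
  obtain ⟨B, hBF, hB⟩ := hreserve 1
  have hAB : Disjoint A B := Finset.disjoint_coe.1 ((hdisj zero_ne_one).mono hAF hBF)
  exact JoinAhead.joinWins ⟨A, B, hA, hB, hAB, le_rfl⟩ ha hb

/-- **Lehman's theorem.** If `a, b` are vertices of a finite multigraph `G` (given by an
edge-endpoint map `ends`) admitting a `2`-positive subgraph `(V', E')` containing both
`a` and `b`, then Join has a winning strategy for the Shannon switching game on
`(G, a, b)`. -/
theorem join_wins_shannon_switching_game
    {V E : Type} [Fintype V] [Fintype E] [DecidableEq E]
    (ends : E → V × V) (a b : V)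
    (hpos : ∃ (V' : Set V) (E' : Set E), a ∈ V' ∧ b ∈ V' ∧
      (∀ e ∈ E', (ends e).1 ∈ V' ∧ (ends e).2 ∈ V') ∧
      kPositive ends V' E' 2) :
    JoinWins ends a b 1 := by
  obtain ⟨V', E', hV'⟩ := hpos
  exact join_wins_shannon_switching_game_general ends a b ⟨V', E', V'.toFinite, hV'⟩

end ShannonSwitching
end

section
/- For every n ∈ ℕ and every edge e of S_{(n+1)×n}, Maker has a winning strategy for the (1,1)-crossing game on S_{(n+1)×n} (the game of Bridg-it) whose first move is the edge e. In other words, Maker can choose any edge she wants on her first move and still win. -/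
namespace CrossingGames

/-!
Lehman's strategy: Maker is safe as long as two disjoint sets of unclaimed edges each complete her
edges to a set connecting the whole board, with the left and the right side contracted to points.
If Breaker deletes an edge of one set, an edge of the other set can be exchanged for it, and
claiming that edge restores the invariant; once all edges are claimed, Maker's edges connect the
two sides.

It remains to find two connecting sets which share the first edge `e` and otherwise partition the
board. These grow from a subboard `S_{2×1}` whose only edge is `e`, or `S_{3×2}` whose only
vertical edge is `e`, by adding one row and one column at a corner: the new horizontal edges, apart
from the one in the corner, extend the first set, while the corner edge and the new vertical edges
extend the second one.
-/

/-! ### Lehman's criterion -/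

/-- The spanning-set axioms of a matroid, for a predicate on edge sets. -/
structure IsSpanningFamily {E : Type*} (P : Set E → Prop) : Prop where
  mono : ∀ {S T : Set E}, S ⊆ T → P S → P T
  exchange : ∀ {S T : Set E} {x : E}, P (insert x S) → P T → ¬ P S → ∃ y ∈ T, P (insert y S)

/-- Lehman's winning criterion, with `M` the edges of Maker and `U` the unclaimed edges: two
disjoint sets of unclaimed edges each complete `M` to a spanning set. -/
def IsSecure {E : Type*} (P : Set E → Prop) (M U : Set E) : Prop :=
  ∃ A B : Set E, A ⊆ U ∧ B ⊆ U ∧ Disjoint A B ∧ P (A ∪ M) ∧ P (B ∪ M)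

namespace IsSecure

variable {E : Type*} {P : Set E → Prop} {M U : Set E}

theorem spans_of_empty (h : IsSecure P M ∅) : P M := by
  obtain ⟨A, -, hA, -, -, hP, -⟩ := h
  rwa [Set.subset_empty_iff.1 hA, Set.empty_union] at hP

theorem claim (hP : IsSpanningFamily P) (h : IsSecure P M U) (y : E) :
    IsSecure P (insert y M) (U \ {y}) := by
  obtain ⟨A, B, hA, hB, hAB, hAM, hBM⟩ := h
  have spans {S : Set E} (hS : P (S ∪ M)) : P (S \ {y} ∪ insert y M) :=
    hP.mono (by grind) hS
  exact ⟨A \ {y}, B \ {y}, Set.sdiff_subset_sdiff_left hA, Set.sdiff_subset_sdiff_left hB,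
    hAB.mono Set.sdiff_subset Set.sdiff_subset, spans hAM, spans hBM⟩

theorem delete (hP : IsSpanningFamily P) (h : IsSecure P M U) (x : E) :
    IsSecure P M (U \ {x}) ∨ ∃ y ∈ U \ {x}, IsSecure P (insert y M) ((U \ {x}) \ {y}) := by
  obtain ⟨A, B, hA, hB, hAB, hAM, hBM⟩ := h
  wlog hx : x ∉ B generalizing A B
  · exact this B A hB hA hAB.symm hBM hAM fun hxA => hAB.notMem_of_mem_left hxA (not_not.1 hx)
  have hBx : B ⊆ U \ {x} := Set.subset_sdiff_singleton hB hx
  have hAx : A \ {x} ⊆ U \ {x} := Set.sdiff_subset_sdiff_left hA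
  by_cases hS : P (A \ {x} ∪ M)
  · exact Or.inl ⟨A \ {x}, B, hAx, hBx, hAB.mono_left Set.sdiff_subset, hS, hBM⟩
  obtain ⟨y, hy, hyS⟩ : ∃ y ∈ B ∪ M, P (insert y (A \ {x} ∪ M)) :=
    hP.exchange (hP.mono (by grind) hAM : P (insert x (A \ {x} ∪ M))) hBM hS
  have hyA : y ∉ A \ {x} ∪ M := fun hmem => hS (by rwa [Set.insert_eq_of_mem hmem] at hyS)
  have hyB : y ∈ B := hy.resolve_right fun hyM => hyA (Or.inr hyM)
  refine Or.inr ⟨y, hBx hyB, A \ {x}, B \ {y}, ?_, Set.sdiff_subset_sdiff_left hBx,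
    hAB.mono Set.sdiff_subset Set.sdiff_subset, by rwa [Set.union_insert], hP.mono (by grind) hBM⟩
  exact Set.subset_sdiff_singleton hAx fun hmem => hyA (Or.inl hmem)

theorem exists_reply (hP : IsSpanningFamily P) (h : IsSecure P M U) {w : Finset E}
    (hw : w.card ≤ 1) :
    ∃ m : Finset E, ↑m ⊆ U \ ↑w ∧ (m.card = 1 ∨ m.card < 1 ∧ U \ ↑w ⊆ ↑m) ∧
      IsSecure P (M ∪ ↑m) ((U \ ↑w) \ ↑m) := by
  have hdel : IsSecure P M (U \ ↑w) ∨ ∃ y ∈ U \ ↑w, IsSecure P (insert y M) ((U \ ↑w) \ {y}) := by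
    rcases Nat.le_one_iff_eq_zero_or_eq_one.1 hw with hw | hw
    · simpa [Finset.card_eq_zero.1 hw] using Or.inl h
    · obtain ⟨x, rfl⟩ := Finset.card_eq_one.1 hw
      simpa using h.delete hP x
  rcases (U \ ↑w).eq_empty_or_nonempty with hU | ⟨z, hz⟩
  · refine ⟨∅, by simp, Or.inr ⟨by simp, by simp [hU]⟩, ?_⟩
    simpa [hU] using hdel
  · obtain ⟨y, hy, hsec⟩ : ∃ y ∈ U \ ↑w, IsSecure P (insert y M) ((U \ ↑w) \ {y}) :=
      hdel.elim (fun hsec => ⟨z, hz, hsec.claim hP z⟩) id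
    exact ⟨{y}, by simpa using hy, Or.inl (by simp), by simpa using hsec⟩

end IsSecure

/-! ### Winning strategies from safe replies -/

theorem allClaimed_concat (h : List (Finset Edge)) (m : Finset Edge) :
    allClaimed (h ++ [m]) = allClaimed h ∪ m := by
  induction h with
  | nil => simp [allClaimed]
  | cons a h ih =>
    change a ∪ allClaimed (h ++ [m]) = a ∪ allClaimed h ∪ m
    rw [ih, Finset.union_assoc]

theorem altUnion_concat (b : Bool) (h : List (Finset Edge)) (m : Finset Edge) :
    altUnion b (h ++ [m]) = if Even h.length ↔ b then altUnion b h ∪ m else altUnion b h := by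
  induction h generalizing b with
  | nil => cases b <;> simp [altUnion]
  | cons a h ih =>
    cases b <;> simp only [List.cons_append, altUnion, ih, List.length_cons, Nat.even_add_one] <;>
      split_ifs <;> simp_all [Finset.union_assoc]

theorem firstClaimed_concat_of_even {h : List (Finset Edge)} (hh : Even h.length)
    (m : Finset Edge) : firstClaimed (h ++ [m]) = firstClaimed h ∪ m := by
  simp [firstClaimed, altUnion_concat, hh]

theorem firstClaimed_concat_of_odd {h : List (Finset Edge)} (hh : Odd h.length)
    (m : Finset Edge) : firstClaimed (h ++ [m]) = firstClaimed h := by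
  simp [firstClaimed, altUnion_concat, Nat.not_even_iff_odd.2 hh]

theorem hist_succ (σ τ : Strategy) (t : ℕ) :
    hist σ τ (t + 1) =
      hist σ τ t ++ [σ (hist σ τ t)] ++ [τ (hist σ τ t ++ [σ (hist σ τ t)])] := by
  simp [hist]

theorem exists_strategy_of_reply {board : Set Edge} {p q : ℕ}
    {Safe : List (Finset Edge) → Prop} {m₀ : Finset Edge} (hm₀ : LegalMove board [] p m₀)
    (start : Safe [m₀])
    (reply : ∀ h w, Safe h → LegalMove board h q w →
      ∃ m, LegalMove board (h ++ [w]) p m ∧ Safe (h ++ [w] ++ [m])) :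
    ∃ σ : Strategy, σ [] = m₀ ∧ ∀ τ, SecondLegal board q σ τ →
      ∀ t, LegalMove board (hist σ τ t) p (σ (hist σ τ t)) ∧
        Safe (hist σ τ t ++ [σ (hist σ τ t)]) := by
  classical
  let σ : Strategy := fun h =>
    if h = [] then m₀ else Classical.epsilon fun m => LegalMove board h p m ∧ Safe (h ++ [m])
  refine ⟨σ, rfl, fun τ hτ t => ?_⟩
  induction t with
  | zero => exact ⟨hm₀, start⟩
  | succ t ih =>
    have hreply := reply _ _ ih.2 (hτ t)
    rw [← hist_succ] at hreply
    have hσ : σ (hist σ τ (t + 1)) = Classical.epsilon fun m =>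
        LegalMove board (hist σ τ (t + 1)) p m ∧ Safe (hist σ τ (t + 1) ++ [m]) :=
      if_neg (by simp [hist_succ])
    rw [hσ]
    exact Classical.epsilon_spec hreply

theorem LegalMove.nonempty {board : Set Edge} {h : List (Finset Edge)} {k : ℕ}
    {mv : Finset Edge} (hmv : LegalMove board h k mv) (hk : 0 < k)
    (hfree : (board \ ↑(allClaimed h)).Nonempty) : mv.Nonempty := by
  rcases hmv.2 with hcard | ⟨-, hall⟩
  · exact Finset.card_pos.1 (hcard ▸ hk)
  · exact Finset.coe_nonempty.1 (hfree.mono hall)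

theorem FirstLegal.board_subset_allClaimed {board : Set Edge} {p : ℕ} {σ τ : Strategy}
    (hσ : FirstLegal board p σ τ) (hfin : board.Finite) (hp : 0 < p) :
    board ⊆ ↑(allClaimed (hist σ τ board.ncard)) := by
  let free (t : ℕ) : Set Edge := board \ ↑(allClaimed (hist σ τ t))
  have free_finite (t : ℕ) : (free t).Finite := hfin.subset Set.sdiff_subset
  have free_succ (t : ℕ) : free (t + 1) ⊆ free t \ ↑(σ (hist σ τ t)) := by
    simp only [free, hist_succ, allClaimed_concat, Finset.coe_union]
    grind
  have ncard_free_le (t : ℕ) : (free t).ncard ≤ board.ncard - t := by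
    induction t with
    | zero => exact Set.ncard_le_ncard Set.sdiff_subset hfin
    | succ t ih =>
      rcases (free t).eq_empty_or_nonempty with hempty | hne
      · have : free (t + 1) = ∅ :=
          Set.subset_empty_iff.1 ((free_succ t).trans (hempty ▸ Set.sdiff_subset))
        simp [this]
      · obtain ⟨y, hy⟩ := (hσ t).nonempty hp hne
        have hlt : (free (t + 1)).ncard < (free t).ncard :=
          Set.ncard_lt_ncard ⟨(free_succ t).trans Set.sdiff_subset,
            fun hsub => (free_succ t (hsub ((hσ t).1 hy))).2 hy⟩ (free_finite t)
        omega
  have hzero : (free board.ncard).ncard = 0 := by simpa using ncard_free_le board.ncard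
  exact Set.sdiff_eq_empty.1 ((Set.ncard_eq_zero (free_finite _)).1 hzero)

theorem IsSpanningFamily.exists_winning_strategy {board : Set Edge} {P : Set Edge → Prop}
    (hP : IsSpanningFamily P) (hfin : board.Finite) {e : Edge} (he : e ∈ board)
    (hsec : IsSecure P {e} (board \ {e})) :
    ∃ σ : Strategy, σ [] = {e} ∧ ∀ τ, SecondLegal board 1 σ τ →
      FirstLegal board 1 σ τ ∧ ∃ t, P ↑(firstClaimed (hist σ τ t)) := by
  let Safe (h : List (Finset Edge)) : Prop :=
    Odd h.length ∧ IsSecure P ↑(firstClaimed h) (board \ ↑(allClaimed h))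
  have reply (h : List (Finset Edge)) (w : Finset Edge) (hsafe : Safe h)
      (hw : LegalMove board h 1 w) :
      ∃ m, LegalMove board (h ++ [w]) 1 m ∧ Safe (h ++ [w] ++ [m]) := by
    obtain ⟨hodd, hsec⟩ := hsafe
    have heven : Even (h ++ [w]).length := by simpa using hodd.add_one
    obtain ⟨m, hm⟩ := hsec.exists_reply hP (hw.2.elim Eq.le fun hlt => hlt.1.le)
    refine ⟨m, ?_, by rw [List.length_append]; exact heven.add_one, ?_⟩
    · simpa only [LegalMove, allClaimed_concat, Finset.coe_union, ← Set.sdiff_sdiff] using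
        ⟨hm.1, hm.2.1⟩
    · simpa only [firstClaimed_concat_of_even heven, firstClaimed_concat_of_odd hodd,
        allClaimed_concat, Finset.coe_union, ← Set.sdiff_sdiff] using hm.2.2
  obtain ⟨σ, hσe, hσ⟩ := exists_strategy_of_reply (m₀ := {e}) (Safe := Safe)
    ⟨by simpa [allClaimed] using he, Or.inl (Finset.card_singleton e)⟩
    ⟨by simp, by simpa [firstClaimed, altUnion, allClaimed] using hsec⟩ reply
  refine ⟨σ, hσe, fun τ hτ => ?_⟩
  have hlegal : FirstLegal board 1 σ τ := fun t => (hσ τ hτ t).1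
  refine ⟨hlegal, board.ncard + 1, ?_⟩
  obtain ⟨hodd, hfinal⟩ := (hσ τ hτ board.ncard).2
  have hfull := hlegal.board_subset_allClaimed hfin one_pos
  rw [hist_succ, firstClaimed_concat_of_odd hodd]
  refine IsSecure.spans_of_empty ?_
  rwa [allClaimed_concat, Finset.coe_union,
    Set.sdiff_eq_empty.2 (hfull.trans Set.subset_union_left)] at hfinal

/-! ### Connecting sets of edges -/

/-- The vertex set of the translate of `S_{(n+1)×n}` with lower left corner `(p, q)`; its sides
are the columns `x = p` and `x = p + n`. -/
def boardVtx (p q : ℤ) (n : ℕ) : Set Vtx :=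
  Set.Icc p (p + n) ×ˢ Set.Ico q (q + n)

/-- The edge set of the translate of `S_{(n+1)×n}` with lower left corner `(p, q)`. -/
def boardEdges (p q : ℤ) (n : ℕ) : Set Edge :=
  {e | (ends e).1 ∈ boardVtx p q n ∧ (ends e).2 ∈ boardVtx p q n ∧
    ¬ (e.2 = false ∧ (e.1.1 = p ∨ e.1.1 = p + n))}

@[simp]
theorem mk_mem_boardVtx {p q x y : ℤ} {n : ℕ} :
    (x, y) ∈ boardVtx p q n ↔ (p ≤ x ∧ x ≤ p + n) ∧ q ≤ y ∧ y < q + n :=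
  Iff.rfl

@[simp]
theorem horizontal_mem_boardEdges {p q x y : ℤ} {n : ℕ} :
    ((x, y), true) ∈ boardEdges p q n ↔ p ≤ x ∧ x < p + n ∧ q ≤ y ∧ y < q + n := by
  simp only [boardEdges, ends, if_true, Set.mem_ofPred_eq, mk_mem_boardVtx]
  grind

@[simp]
theorem vertical_mem_boardEdges {p q x y : ℤ} {n : ℕ} :
    ((x, y), false) ∈ boardEdges p q n ↔ p < x ∧ x < p + n ∧ q ≤ y ∧ y + 1 < q + n := by
  simp only [boardEdges, ends, Bool.false_eq_true, if_false, Set.mem_ofPred_eq, mk_mem_boardVtx]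
  grind

theorem boardVtx_one_one (n : ℕ) : boardVtx 1 1 n = lamVtx (n + 1) n := by
  ext ⟨x, y⟩
  simp only [mk_mem_boardVtx, lamVtx, Set.mem_ofPred_eq]
  grind

theorem boardEdges_one_one (n : ℕ) : boardEdges 1 1 n = sEdges (n + 1) n := by
  ext e
  simp [boardEdges, sEdges, lamEdges, boardVtx_one_one, and_assoc, add_comm]

theorem boardEdges_finite (p q : ℤ) (n : ℕ) : (boardEdges p q n).Finite :=
  (((Set.finite_Icc _ _).prod (Set.finite_Ico _ _)).prod Set.finite_univ).subset
    fun _ he => ⟨he.1, trivial⟩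

/-- `C` is a union of components of the graph formed by the board edges in `S` once the left and
the right side of the board are contracted to points. -/
structure IsComponentUnion (p q : ℤ) (n : ℕ) (S : Set Edge) (C : Set Vtx) : Prop where
  edge : ∀ e ∈ S, e ∈ boardEdges p q n → ((ends e).1 ∈ C ↔ (ends e).2 ∈ C)
  left : ∀ y ∈ Set.Ico q (q + n), ∀ y' ∈ Set.Ico q (q + n), (p, y) ∈ C ↔ (p, y') ∈ C
  right : ∀ y ∈ Set.Ico q (q + n), ∀ y' ∈ Set.Ico q (q + n), (p + n, y) ∈ C ↔ (p + n, y') ∈ C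

/-- The edges of `S` connect the whole board once the left and the right side are contracted to
points: no cut separates two vertices. -/
def Connects (p q : ℤ) (n : ℕ) (S : Set Edge) : Prop :=
  ∀ C, IsComponentUnion p q n S C →
    ∀ u ∈ boardVtx p q n, ∀ v ∈ boardVtx p q n, u ∈ C ↔ v ∈ C

section Connectivity

variable {p q : ℤ} {n : ℕ} {S T : Set Edge} {C D : Set Vtx}

namespace IsComponentUnion

theorem mono (hC : IsComponentUnion p q n T C) (hST : S ∩ boardEdges p q n ⊆ T) :
    IsComponentUnion p q n S C :=
  ⟨fun e he hb => hC.edge e (hST ⟨he, hb⟩) hb, hC.left, hC.right⟩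

theorem insert {e : Edge} (hC : IsComponentUnion p q n S C)
    (he : (ends e).1 ∈ C ↔ (ends e).2 ∈ C) : IsComponentUnion p q n (insert e S) C :=
  ⟨by rintro _ (rfl | hS) hb; exacts [he, hC.edge _ hS hb], hC.left, hC.right⟩

theorem agree (hC : IsComponentUnion p q n S C) (hD : IsComponentUnion p q n S D) :
    IsComponentUnion p q n S {v | v ∈ C ↔ v ∈ D} :=
  ⟨fun e he hb => iff_congr (hC.edge e he hb) (hD.edge e he hb),
    fun y hy y' hy' => iff_congr (hC.left y hy y' hy') (hD.left y hy y' hy'),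
    fun y hy y' hy' => iff_congr (hC.right y hy y' hy') (hD.right y hy y' hy')⟩

theorem horizontal (hC : IsComponentUnion p q n S C) {x y : ℤ} (hS : ((x, y), true) ∈ S)
    (hx : p ≤ x ∧ x < p + n) (hy : q ≤ y ∧ y < q + n) : (x, y) ∈ C ↔ (x + 1, y) ∈ C :=
  hC.edge _ hS (horizontal_mem_boardEdges.2 ⟨hx.1, hx.2, hy.1, hy.2⟩)

theorem vertical (hC : IsComponentUnion p q n S C) {x y : ℤ} (hS : ((x, y), false) ∈ S)
    (hx : p < x ∧ x < p + n) (hy : q ≤ y ∧ y + 1 < q + n) : (x, y) ∈ C ↔ (x, y + 1) ∈ C :=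
  hC.edge _ hS (vertical_mem_boardEdges.2 ⟨hx.1, hx.2, hy.1, hy.2⟩)

end IsComponentUnion

theorem Connects.mono (hS : Connects p q n S) (hST : S ∩ boardEdges p q n ⊆ T) :
    Connects p q n T :=
  fun C hC => hS C (hC.mono hST)

-- A cut separating `S` separates the ends of `x` and of some `y ∈ T`. If a cut of `insert y S`
-- also separated the ends of `x`, then the set where both cuts agree would be a cut of `insert x S`
-- separating the ends of `y`.
theorem Connects.exchange {x : Edge} (hx : Connects p q n (insert x S)) (hT : Connects p q n T)
    (hS : ¬ Connects p q n S) : ∃ y ∈ T, Connects p q n (insert y S) := by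
  obtain ⟨C, hC, hne⟩ : ∃ C, IsComponentUnion p q n S C ∧
      ¬ ∀ u ∈ boardVtx p q n, ∀ v ∈ boardVtx p q n, u ∈ C ↔ v ∈ C := by
    simpa only [Connects, not_forall, exists_prop] using hS
  have hxC : ¬ ((ends x).1 ∈ C ↔ (ends x).2 ∈ C) := fun h => hne (hx C (hC.insert h))
  obtain ⟨y, hyT, hyb, hyC⟩ : ∃ y ∈ T, y ∈ boardEdges p q n ∧
      ¬ ((ends y).1 ∈ C ↔ (ends y).2 ∈ C) := by
    by_contra! hcon
    exact hne (hT C ⟨hcon, hC.left, hC.right⟩)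
  refine ⟨y, hyT, fun D hD => ?_⟩
  have hDS : IsComponentUnion p q n S D :=
    hD.mono (Set.inter_subset_left.trans (Set.subset_insert y S))
  have hyD : (ends y).1 ∈ D ↔ (ends y).2 ∈ D := hD.edge y (Set.mem_insert y S) hyb
  by_cases hxD : (ends x).1 ∈ D ↔ (ends x).2 ∈ D
  · exact hx D (hDS.insert hxD)
  · have hxCD : (ends x).1 ∈ {v | v ∈ C ↔ v ∈ D} ↔ (ends x).2 ∈ {v | v ∈ C ↔ v ∈ D} := by
      simp only [Set.mem_ofPred_eq]
      tauto
    have hyCD := hx _ ((hC.agree hDS).insert hxCD) _ hyb.1 _ hyb.2.1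
    simp only [Set.mem_ofPred_eq] at hyCD
    tauto

theorem isSpanningFamily_connects (p q : ℤ) (n : ℕ) : IsSpanningFamily (Connects p q n) :=
  ⟨fun hST hS => hS.mono (Set.inter_subset_left.trans hST), Connects.exchange⟩

end Connectivity

theorem iff_of_forall_iff_succ {f : ℤ → Prop} {a b : ℤ}
    (h : ∀ x, a ≤ x → x < b → (f x ↔ f (x + 1))) {x : ℤ} (hax : a ≤ x) (hxb : x ≤ b) :
    f a ↔ f x := by
  induction x, hax using Int.leInduction with
  | base => rfl
  | succ x hax ih => exact (ih (by omega)).trans (h x hax (by omega))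

/-! ### Growing a board -/

section Growth

variable {p q p' q' : ℤ} {n : ℕ} {S T : Set Edge}

/-- The horizontal edges lying in a row or in a column of the board with corner `(p, q)`. When
that board grows by one row and one column these get the first colour, while the new vertical edges
and the horizontal edge in the new corner get the second one. -/
def alignedHorizontals (p q : ℤ) (n : ℕ) : Set Edge :=
  {e | e.2 = true ∧ (e.1.1 ∈ Set.Ico p (p + n) ∨ e.1.2 ∈ Set.Ico q (q + n))}

theorem Connects.iff_of_mem_grown {C : Set Vtx} (hS : Connects p q n S) (hn : 0 < n)
    (hp : p = p' ∨ p = p' + 1) (hq : q = q' ∨ q = q' + 1)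
    (hC : IsComponentUnion p' q' (n + 1) T C) (hST : S ∩ boardEdges p q n ⊆ T)
    (left : ∀ y ∈ Set.Ico q (q + n), (p, y) ∈ C ↔ (p', y) ∈ C)
    (right : ∀ y ∈ Set.Ico q (q + n), (p + n, y) ∈ C ↔ (p' + (n + 1 : ℕ), y) ∈ C)
    (row : ∀ x y, p' < x → x < p' + n + 1 → q' ≤ y → y < q' + n + 1 → y ∉ Set.Ico q (q + n) →
      ∃ v ∈ boardVtx p q n, (x, y) ∈ C ↔ v ∈ C) :
    ∀ u ∈ boardVtx p' q' (n + 1), ∀ v ∈ boardVtx p' q' (n + 1), u ∈ C ↔ v ∈ C := by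
  have rows_subset : Set.Ico q (q + n) ⊆ Set.Ico q' (q' + (n + 1 : ℕ)) :=
    Set.Ico_subset_Ico (by omega) (by omega)
  have edges_subset : boardEdges p q n ⊆ boardEdges p' q' (n + 1) := by
    rintro ⟨⟨x, y⟩, _ | _⟩ hb <;> simp at hb ⊢ <;> omega
  have hC₀ : IsComponentUnion p q n S C :=
    ⟨fun e he hb => hC.edge e (hST ⟨he, hb⟩) (edges_subset hb),
      fun y hy y' hy' => (left y hy).trans <|
        (hC.left y (rows_subset hy) y' (rows_subset hy')).trans (left y' hy').symm,
      fun y hy y' hy' => (right y hy).trans <|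
        (hC.right y (rows_subset hy) y' (rows_subset hy')).trans (right y' hy').symm⟩
  have old : ∀ v ∈ boardVtx p q n, v ∈ C ↔ (p, q) ∈ C :=
    fun v hv => hS C hC₀ v hv (p, q) (by simp; omega)
  have hq₀ : q ∈ Set.Ico q (q + n) := by simp; omega
  suffices h : ∀ u ∈ boardVtx p' q' (n + 1), u ∈ C ↔ (p, q) ∈ C from
    fun u hu v hv => (h u hu).trans (h v hv).symm
  rintro ⟨x, y⟩ ⟨hx, hy⟩
  rcases eq_or_ne x p' with rfl | hxl
  · exact (hC.left y hy q (rows_subset hq₀)).trans (left q hq₀).symm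
  rcases eq_or_ne x (p' + (n + 1 : ℕ)) with rfl | hxr
  · exact (hC.right y hy q (rows_subset hq₀)).trans <|
      (right q hq₀).symm.trans (old _ (by simp; omega))
  simp only [Set.mem_Icc, Set.mem_Ico] at hx hy
  by_cases hyq : y ∈ Set.Ico q (q + n)
  · exact old _ ⟨by simp; omega, hyq⟩
  · obtain ⟨v, hv, hxv⟩ := row x y (by omega) (by omega) (by omega) (by omega) hyq
    exact hxv.trans (old v hv)

theorem Connects.grow_of_alignedHorizontals (hS : Connects p q n S) (hn : 0 < n)
    (hp : p = p' ∨ p = p' + 1) (hq : q = q' ∨ q = q' + 1) (hST : S ∩ boardEdges p q n ⊆ T)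
    (hT : alignedHorizontals p q n \ boardEdges p q n ⊆ T) : Connects p' q' (n + 1) T := by
  intro C hC
  have column {x y : ℤ} (hx : x < p ∨ p + n ≤ x) (hx' : p' ≤ x ∧ x < p' + n + 1)
      (hy : q ≤ y ∧ y < q + n) : (x, y) ∈ C ↔ (x + 1, y) ∈ C :=
    hC.horizontal (hT (by simp [alignedHorizontals]; omega)) (by omega) (by omega)
  have row {x y : ℤ} (hx : p ≤ x ∧ x ≤ p + n) (hy : y < q ∨ q + n ≤ y)
      (hy' : q' ≤ y ∧ y < q' + n + 1) : (p, y) ∈ C ↔ (x, y) ∈ C :=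
    iff_of_forall_iff_succ (f := fun x => (x, y) ∈ C) (b := p + n)
      (fun x hpx hxp => hC.horizontal (hT (by simp [alignedHorizontals]; omega))
        (by omega) (by omega)) hx.1 hx.2
  refine hS.iff_of_mem_grown hn hp hq hC hST (fun y hy => ?_) (fun y hy => ?_)
    (fun x y hxl hxr hyl hyr hy => ?_)
  · obtain rfl | rfl := hp
    · rfl
    · exact (column (by omega) (by omega) hy).symm
  · obtain rfl | rfl := hp
    · simpa [add_assoc] using column (x := p + n) (by omega) (by omega) hy
    · rw [show p' + 1 + (n : ℤ) = p' + (n + 1 : ℕ) by push_cast; ring]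
  · simp only [Set.mem_Ico, not_and_or, not_le, not_lt] at hy
    have hx := row (x := x) (by omega) hy (by omega)
    obtain rfl | rfl := hp
    · exact ⟨(p, q), by simp; omega,
        hx.symm.trans (hC.left y (by simp; omega) q (by simp; omega))⟩
    · refine ⟨(p' + (n + 1 : ℕ), q), by simp; omega, hx.symm.trans ?_⟩
      refine (row (x := p' + (n + 1 : ℕ)) (by simp; omega) hy (by omega)).trans ?_
      exact hC.right y (by simp; omega) q (by simp; omega)

theorem Connects.grow_of_compl_alignedHorizontals (hS : Connects p q n S) (hn : 0 < n)
    (hp : p = p' ∨ p = p' + 1) (hq : q = q' ∨ q = q' + 1) (hST : S ∩ boardEdges p q n ⊆ T)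
    (hT : (alignedHorizontals p q n)ᶜ \ boardEdges p q n ⊆ T) : Connects p' q' (n + 1) T := by
  intro C hC
  obtain ⟨r, hr, hr'⟩ : ∃ r, (r < q ∨ q + n ≤ r) ∧ q' ≤ r ∧ r < q' + n + 1 := by
    obtain rfl | rfl := hq
    exacts [⟨q + n, by omega⟩, ⟨q', by omega⟩]
  have corner {x : ℤ} (hx : x < p ∨ p + n ≤ x) (hx' : p' ≤ x ∧ x < p' + n + 1) :
      (x, r) ∈ C ↔ (x + 1, r) ∈ C :=
    hC.horizontal (hT (by simp [alignedHorizontals]; omega)) (by omega) (by omega)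
  have vertical {x y : ℤ} (hxy : x ≤ p ∨ p + n ≤ x ∨ y < q ∨ q + n ≤ y + 1)
      (hx : p' < x ∧ x < p' + n + 1) (hy : q' ≤ y ∧ y < q' + n) :
      (x, y) ∈ C ↔ (x, y + 1) ∈ C :=
    hC.vertical (hT (by simp [alignedHorizontals]; omega)) (by omega) (by omega)
  have column {x y : ℤ} (hx : x ≤ p ∨ p + n ≤ x) (hx' : p' < x ∧ x < p' + n + 1)
      (hy : q' ≤ y ∧ y < q' + n + 1) : (x, r) ∈ C ↔ (x, y) ∈ C := by
    have bottom {z : ℤ} (hz : q' ≤ z ∧ z < q' + n + 1) : (x, q') ∈ C ↔ (x, z) ∈ C :=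
      iff_of_forall_iff_succ (f := fun y => (x, y) ∈ C) (b := q' + n)
        (fun y _ _ => vertical (by omega) hx' (by omega)) hz.1 (by omega)
    exact (bottom hr').symm.trans (bottom hy)
  refine hS.iff_of_mem_grown hn hp hq hC hST (fun y hy => ?_) (fun y hy => ?_)
    (fun x y hxl hxr hyl hyr hy => ?_)
  · rw [Set.mem_Ico] at hy
    obtain rfl | rfl := hp
    · rfl
    · refine (column (by omega) (by omega) (by omega)).symm.trans ?_
      refine (corner (by omega) (by omega)).symm.trans ?_
      exact hC.left r (by simp; omega) y (by simp; omega)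
  · rw [Set.mem_Ico] at hy
    obtain rfl | rfl := hp
    · refine (column (by omega) (by omega) (by omega)).symm.trans ?_
      refine (corner (by omega) (by omega)).trans ?_
      simpa [add_assoc] using hC.right r (by simp; omega) y (by simp; omega)
    · rw [show p' + 1 + (n : ℤ) = p' + (n + 1 : ℕ) by push_cast; ring]
  · simp only [Set.mem_Ico, not_and_or, not_le, not_lt] at hy
    rcases hy with hy | hy
    · exact ⟨(x, y + 1), by simp; omega, vertical (by omega) (by omega) (by omega)⟩
    · refine ⟨(x, y - 1), by simp; omega, ?_⟩
      simpa using (vertical (x := x) (y := y - 1) (by omega) (by omega) (by omega)).symm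

end Growth

/-- The edge `e` is shared by two connecting sets which otherwise partition the edges; claiming `e`
then puts Maker in a secure position. -/
def HasColoring (p q : ℤ) (n : ℕ) (e : Edge) : Prop :=
  ∃ A : Set Edge, Connects p q n (insert e A) ∧ Connects p q n (insert e Aᶜ)

section Coloring

variable {p q p' q' : ℤ} {n : ℕ} {e : Edge}

theorem HasColoring.isSecure (h : HasColoring p q n e) :
    IsSecure (Connects p q n) {e} (boardEdges p q n \ {e}) := by
  obtain ⟨A, hA, hB⟩ := h
  refine ⟨A ∩ (boardEdges p q n \ {e}), Aᶜ ∩ (boardEdges p q n \ {e}), Set.inter_subset_right,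
    Set.inter_subset_right, ?_, hA.mono ?_, hB.mono ?_⟩
  · exact disjoint_compl_right.mono Set.inter_subset_left Set.inter_subset_left
  all_goals grind

theorem HasColoring.grow (h : HasColoring p q n e) (hn : 0 < n) (hp : p = p' ∨ p = p' + 1)
    (hq : q = q' ∨ q = q' + 1) : HasColoring p' q' (n + 1) e := by
  obtain ⟨A, hA, hB⟩ := h
  refine ⟨(boardEdges p q n).ite A (alignedHorizontals p q n),
    hA.grow_of_alignedHorizontals hn hp hq ?_ ?_, ?_⟩
  · grind [Set.ite]
  · grind [Set.ite]
  · rw [← Set.ite_compl]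
    refine hB.grow_of_compl_alignedHorizontals hn hp hq ?_ ?_ <;> grind [Set.ite]

theorem connects_one {S : Set Edge} (hS : ((p, q), true) ∈ S) : Connects p q 1 S := by
  intro C hC
  have hpq := hC.horizontal hS (by simp) (by simp)
  suffices h : ∀ u ∈ boardVtx p q 1, u ∈ C ↔ (p, q) ∈ C from
    fun u hu v hv => (h u hu).trans (h v hv).symm
  rintro ⟨x, y⟩ hu
  simp only [mk_mem_boardVtx, Nat.cast_one] at hu
  obtain rfl : y = q := by omega
  obtain rfl | rfl : x = p ∨ x = p + 1 := by omega
  exacts [Iff.rfl, hpq.symm]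

theorem connects_two_of_vertical {S : Set Edge} {y y' : ℤ} (hS : ((p + 1, q), false) ∈ S)
    (hy : y ∈ Set.Icc q (q + 1)) (hl : ((p, y), true) ∈ S)
    (hy' : y' ∈ Set.Icc q (q + 1)) (hr : ((p + 1, y'), true) ∈ S) : Connects p q 2 S := by
  intro C hC
  simp only [Set.mem_Icc] at hy hy'
  have middle {z : ℤ} (hz : q ≤ z ∧ z ≤ q + 1) : (p + 1, z) ∈ C ↔ (p + 1, q) ∈ C := by
    obtain rfl | rfl : z = q ∨ z = q + 1 := by omega
    exacts [Iff.rfl, (hC.vertical hS (by simp) (by simp)).symm]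
  have left := hC.horizontal hl (by simp) (by push_cast; omega)
  have right := hC.horizontal hr (by simp) (by push_cast; omega)
  suffices h : ∀ u ∈ boardVtx p q 2, u ∈ C ↔ (p + 1, q) ∈ C from
    fun u hu v hv => (h u hu).trans (h v hv).symm
  rintro ⟨x, z⟩ hu
  simp only [mk_mem_boardVtx, Nat.cast_ofNat] at hu
  obtain rfl | rfl | rfl : x = p ∨ x = p + 1 ∨ x = p + 2 := by omega
  · refine (hC.left z (by simp; omega) y (by simp; omega)).trans ?_
    exact left.trans (middle hy)
  · exact middle (by omega)
  · refine (hC.right z (by simp; omega) y' (by simp; omega)).trans ?_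
    rw [add_assoc, one_add_one_eq_two] at right
    exact right.symm.trans (middle hy')

theorem hasColoring_one (p q : ℤ) : HasColoring p q 1 ((p, q), true) :=
  ⟨∅, connects_one (Set.mem_insert _ _), connects_one (Set.mem_insert _ _)⟩

theorem hasColoring_two_vertical (p q : ℤ) : HasColoring p q 2 ((p + 1, q), false) := by
  refine ⟨{((p, q), true), ((p + 1, q + 1), true)}, ?_, ?_⟩
  · exact connects_two_of_vertical (y := q) (y' := q + 1) (by simp) (by simp) (by simp) (by simp)
      (by simp)
  · exact connects_two_of_vertical (y := q + 1) (y' := q) (by simp) (by simp) (by simp) (by simp)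
      (by simp)

theorem exists_subboard (hn : 0 < n) (he : e ∈ boardEdges p q (n + 1)) :
    (∃ p₁ q₁, (p₁ = p ∨ p₁ = p + 1) ∧ (q₁ = q ∨ q₁ = q + 1) ∧ e ∈ boardEdges p₁ q₁ n) ∨
      n = 1 ∧ e = ((p + 1, q), false) := by
  obtain ⟨⟨x, y⟩, _ | _⟩ := e
  · simp only [vertical_mem_boardEdges, Nat.cast_add, Nat.cast_one] at he
    rcases eq_or_ne n 1 with rfl | hn₁
    · right
      simp only [Prod.mk.injEq, and_true, true_and]
      omega
    · refine .inl ⟨if x < p + n then p else p + 1, if y + 1 < q + n then q else q + 1, ?_⟩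
      simp only [vertical_mem_boardEdges]
      split_ifs <;> omega
  · simp only [horizontal_mem_boardEdges, Nat.cast_add, Nat.cast_one] at he
    refine .inl ⟨if x < p + n then p else p + 1, if y < q + n then q else q + 1, ?_⟩
    simp only [horizontal_mem_boardEdges]
    split_ifs <;> omega

theorem hasColoring (p q : ℤ) (n : ℕ) (e : Edge) (he : e ∈ boardEdges p q n) :
    HasColoring p q n e := by
  induction n generalizing p q with
  | zero => exact absurd he.1 (by simp [boardVtx])
  | succ n ih =>
    rcases n.eq_zero_or_pos with rfl | hn
    · obtain ⟨⟨x, y⟩, _ | _⟩ := e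
      · simp only [vertical_mem_boardEdges] at he
        omega
      · simp only [horizontal_mem_boardEdges] at he
        obtain ⟨rfl, rfl⟩ : x = p ∧ y = q := by omega
        exact hasColoring_one x y
    · obtain ⟨p₁, q₁, hp, hq, hb⟩ | ⟨rfl, rfl⟩ := exists_subboard hn he
      · exact (ih p₁ q₁ hb).grow hn hp hq
      · exact hasColoring_two_vertical p q

end Coloring

/-! ### Crossings -/

section Crossing

/-- Adjacency inside the grid through an edge of `S`, whose paths are those of `HasCrossing`. -/
def GridAdj (m n : ℕ) (S : Set Edge) (u v : Vtx) : Prop :=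
  u ∈ lamVtx m n ∧ v ∈ lamVtx m n ∧ ∃ e ∈ S, joins e u v

variable {m n : ℕ} {S : Set Edge}

theorem GridAdj.exists_list {u v : Vtx} (hv : v ∈ lamVtx m n)
    (h : Relation.ReflTransGen (GridAdj m n S) u v) :
    ∃ l : List Vtx, l.head? = some u ∧ l.getLast? = some v ∧ (∀ w ∈ l, w ∈ lamVtx m n) ∧
      ∀ p ∈ cp l, ∃ e ∈ S, joins e p.1 p.2 := by
  induction h using Relation.ReflTransGen.head_induction_on with
  | refl => exact ⟨[v], rfl, rfl, by simpa using hv, by simp [cp]⟩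
  | @head u w huw _ ih =>
    obtain ⟨_ | ⟨x, l⟩, hhead, hlast, hgrid, hedge⟩ := ih
    · simp at hhead
    obtain rfl : x = w := by simpa using hhead
    refine ⟨u :: x :: l, rfl, by simpa using hlast, ?_, ?_⟩
    · exact List.forall_mem_cons.2 ⟨huw.1, hgrid⟩
    · exact List.forall_mem_cons.2 ⟨huw.2.2, hedge⟩

theorem hasCrossing_of_reflTransGen {u v : Vtx} (hu : u.1 = 1) (hv : v.1 = (m : ℤ))
    (hvm : v ∈ lamVtx m n) (h : Relation.ReflTransGen (GridAdj m n S) u v) :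
    HasCrossing m n S := by
  obtain ⟨l, hhead, hlast, hgrid, hedge⟩ := GridAdj.exists_list hvm h
  exact ⟨l, ⟨u, hhead, hu⟩, ⟨v, hlast, hv⟩, hgrid, hedge⟩

theorem isComponentUnion_reachable_from_left (hS : ¬ HasCrossing (n + 1) n S) :
    IsComponentUnion 1 1 n S
      {v | ∃ u ∈ lamVtx (n + 1) n, u.1 = 1 ∧ Relation.ReflTransGen (GridAdj (n + 1) n S) u v} := by
  refine ⟨fun e he hb => ?_, fun y hy y' hy' => ?_, fun y hy y' hy' => ?_⟩
  · obtain ⟨h₁, h₂, -⟩ := hb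
    rw [boardVtx_one_one] at h₁ h₂
    exact ⟨fun ⟨u, hu, hu₁, h⟩ => ⟨u, hu, hu₁, h.tail ⟨h₁, h₂, e, he, .inl ⟨rfl, rfl⟩⟩⟩,
      fun ⟨u, hu, hu₁, h⟩ => ⟨u, hu, hu₁, h.tail ⟨h₂, h₁, e, he, .inr ⟨rfl, rfl⟩⟩⟩⟩
  · have left {z : ℤ} (hz : z ∈ Set.Ico (1 : ℤ) (1 + n)) : (1, z) ∈ lamVtx (n + 1) n := by
      rw [← boardVtx_one_one]
      exact ⟨by simp, hz⟩
    exact iff_of_true ⟨_, left hy, rfl, .refl⟩ ⟨_, left hy', rfl, .refl⟩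
  · have right {z : ℤ} (hz : z ∈ Set.Ico (1 : ℤ) (1 + n)) :
        ¬ ∃ u ∈ lamVtx (n + 1) n, u.1 = 1 ∧
          Relation.ReflTransGen (GridAdj (n + 1) n S) u (1 + n, z) := by
      rintro ⟨u, -, hu, h⟩
      refine hS (hasCrossing_of_reflTransGen hu (by simp [add_comm]) ?_ h)
      rw [← boardVtx_one_one]
      exact ⟨by simp, hz⟩
    exact iff_of_false (right hy) (right hy')

theorem Connects.hasCrossing (hn : 0 < n) (hS : Connects 1 1 n S) : HasCrossing (n + 1) n S := by
  by_contra hcross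
  have hl : ((1, 1) : Vtx) ∈ boardVtx 1 1 n := by simp; omega
  have hr : ((1 + n, 1) : Vtx) ∈ boardVtx 1 1 n := by simp; omega
  obtain ⟨u, -, hu, h⟩ := (hS _ (isComponentUnion_reachable_from_left hcross) _ hl _ hr).1
    ⟨_, boardVtx_one_one n ▸ hl, rfl, .refl⟩
  exact hcross <| hasCrossing_of_reflTransGen hu (by simp [add_comm]) (boardVtx_one_one n ▸ hr) h

end Crossing

/-- **Theorem (Bridg-it with a free first move).** For every `n ≥ 1` and every edge `e`
of `S_{(n+1)×n}`, Maker has a winning strategy for the `(1,1)`-crossing game (Bridg-it)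
on `S_{(n+1)×n}` whose first move is the edge `e`. -/
theorem maker_wins_bridgit_with_any_first_move
    (n : ℕ) (hn : 1 ≤ n) (e : Edge) (he : e ∈ sEdges (n + 1) n) :
    ∃ σ : Strategy, σ [] = {e} ∧
      ∀ τ : Strategy, SecondLegal (sEdges (n + 1) n) 1 σ τ →
        FirstLegal (sEdges (n + 1) n) 1 σ τ ∧
        ∃ t, HasCrossing (n + 1) n ↑(firstClaimed (hist σ τ t)) := by
  rw [← boardEdges_one_one] at he ⊢
  obtain ⟨σ, hσe, hσ⟩ := (isSpanningFamily_connects 1 1 n).exists_winning_strategy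
    (boardEdges_finite 1 1 n) he (hasColoring 1 1 n e he).isSecure
  refine ⟨σ, hσe, fun τ hτ => ?_⟩
  obtain ⟨hlegal, t, hconn⟩ := hσ τ hτ
  exact ⟨hlegal, t, hconn.hasCrossing hn⟩

end CrossingGames
end
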